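/- arXiv:1901.09243 — 2 statements merged into one kernel-verified Lean document; each statement's English description precedes it below -/
import Mathlib

section
/- For every number field K there exist a finite abelian extension N_K/K of degree three and a character χ of Gal(N_K/K) with the following property: for every number field K', every finite abelian extension N_{K'}/K', and every character χ' of Gal(N_{K'}/K'), if the Artin L-functions satisfy L_K(χ, s) = L_{K'}(χ', s), then K and K' are isomorphic as fields. -/
open NumberField

open scoped Classical in
/-- The local Euler factor at a prime `p` of `K` of the Artin L-function of a one-dimensional
character `χ` of the (abelian) Galois group of `N/K`.  If there is a prime `Q` of `N` above `p`
together with a Frobenius element `σ` at `Q` (i.e. `σ x ≡ x ^ N(p) mod Q` for all integers `x`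
of `N`) such that `χ` is trivial on the inertia group at `Q`, the factor is
`(1 - χ(Frob_p) N(p)^{-s})⁻¹`; otherwise (the ramified case where `χ` is nontrivial on
inertia) the factor is `1`.  For an abelian extension this is well defined. -/
noncomputable def localArtinFactor (K N : Type) [Field K] [NumberField K] [Field N]
    [NumberField N] [Algebra K N] (χ : (N ≃ₐ[K] N) →* ℂˣ) (p : Ideal (𝓞 K)) (s : ℂ) : ℂ :=
  if h : ∃ σ : N ≃ₐ[K] N, ∃ Q : Ideal (𝓞 N), Q.IsPrime ∧ Q ≠ ⊥ ∧
      Q.comap (algebraMap (𝓞 K) (𝓞 N)) = p ∧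
      (∀ x : 𝓞 N, galRestrict (𝓞 K) K N (𝓞 N) σ x - x ^ Ideal.absNorm p ∈ Q) ∧
      (∀ τ : N ≃ₐ[K] N, (∀ x : 𝓞 N, galRestrict (𝓞 K) K N (𝓞 N) τ x - x ∈ Q) → χ τ = 1)
  then (1 - (χ h.choose : ℂ) * (Ideal.absNorm p : ℂ) ^ (-s))⁻¹
  else 1

/-- The Artin L-function `L_K(χ, s)` of a one-dimensional character `χ` of the Galois group of
`N/K`, given for `Re(s) > 1` by the Euler product of the local factors over all nonzero prime
ideals of the ring of integers of `K`. -/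
noncomputable def artinLFunction (K N : Type) [Field K] [NumberField K] [Field N]
    [NumberField N] [Algebra K N] (χ : (N ≃ₐ[K] N) →* ℂˣ) (s : ℂ) : ℂ :=
  ∏' p : {p : Ideal (𝓞 K) // p.IsPrime ∧ p ≠ ⊥}, localArtinFactor K N χ p.1 s

/-- A finite abelian extension of a number field `K`: a finite Galois extension `N/K`
with abelian Galois group. -/
structure FiniteAbelianExtension (K : Type) [Field K] [NumberField K] where
  N : Type
  [fieldN : Field N]
  [numberFieldN : NumberField N]
  [algebraN : Algebra K N]
  [finiteDimensionalN : FiniteDimensional K N]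
  [galoisN : IsGalois K N]
  abelian : ∀ σ τ : N ≃ₐ[K] N, σ * τ = τ * σ

attribute [instance] FiniteAbelianExtension.fieldN FiniteAbelianExtension.numberFieldN
  FiniteAbelianExtension.algebraN FiniteAbelianExtension.finiteDimensionalN
  FiniteAbelianExtension.galoisN

/-!
Let `Ω/ℚ` be a Galois extension containing the fields involved. Comparing logarithms, an Artin
L-function determines, for every rational prime power `p ^ k`, the sum of the coefficients of its
Euler factors at the primes above `p`. If `p` is unramified this is the value at `Frob_p ^ k` of the
character of `Gal(Ω/ℚ)` induced from the inflation of `χ` to `Gal(Ω/K)`. Every element of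
`Gal(Ω/ℚ)` is a power of such a Frobenius element (by Frobenius' density theorem, which needs only
the poles at `1` of the Dedekind zeta functions of the subfields of `Ω`), so the L-function
determines the induced character.

The extension `N/K` is a simplest cubic field of Shanks, whose parameter is chosen by the Chinese
remainder theorem at the primes above a rational prime that splits completely in `K`: exactly one of
them is inert in `N`. A Frobenius element `γ` above it fixes all cosets of `Gal(Ω/K)` in
`Gal(Ω/ℚ)`, and contributes a primitive cube root of unity at one coset and `1` at all the others.
If `K'` has the same induced character then `γ` also fixes all cosets of `Gal(Ω/K')`, and weighting
the characters by the powers of `γ` isolates the coset with value `≠ 1` on either side. So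
`Gal(Ω/K)` and `Gal(Ω/K')` are conjugate, and `K` and `K'` are isomorphic.
-/

section InducedCharacter

open Finset

open scoped ComplexOrder

variable {G : Type*} [Group G] {H H' : Subgroup G}

/-- The extension by zero to `G` of a linear character `χ` of a subgroup `H`. -/
noncomputable def extendByZero (χ : H →* ℂˣ) : G → ℂ :=
  Function.extend Subtype.val (fun h => (χ h : ℂ)) 0

variable (χ : H →* ℂˣ) (χ' : H' →* ℂˣ) {g h : G}

lemma extendByZero_of_mem (hg : g ∈ H) : extendByZero χ g = χ ⟨g, hg⟩ :=
  Subtype.val_injective.extend_apply _ _ (⟨g, hg⟩ : H)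

lemma extendByZero_of_notMem (hg : g ∉ H) : extendByZero χ g = 0 :=
  Function.extend_apply' _ _ _ fun ⟨k, hk⟩ => hg (hk ▸ k.2)

lemma extendByZero_ne_zero_iff : extendByZero χ g ≠ 0 ↔ g ∈ H := by
  by_cases hg : g ∈ H
  · simp [extendByZero_of_mem χ hg, hg]
  · simp [extendByZero_of_notMem χ hg, hg]

lemma extendByZero_one : extendByZero χ 1 = 1 := by
  rw [extendByZero_of_mem χ H.one_mem]
  exact congrArg Units.val (map_one χ)

lemma extendByZero_mul (hg : g ∈ H) (k : G) :
    extendByZero χ (g * k) = extendByZero χ g * extendByZero χ k := by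
  by_cases hk : k ∈ H
  · rw [extendByZero_of_mem χ hg, extendByZero_of_mem χ hk,
      extendByZero_of_mem χ (H.mul_mem hg hk), ← Units.val_mul, ← map_mul]
    rfl
  · rw [extendByZero_of_notMem χ hk, mul_zero, extendByZero_of_notMem]
    rwa [H.mul_mem_cancel_left hg]

lemma extendByZero_pow (hg : g ∈ H) (n : ℕ) :
    extendByZero χ (g ^ n) = extendByZero χ g ^ n := by
  induction n with
  | zero => simp [extendByZero_one]
  | succ n ih => rw [pow_succ', extendByZero_mul χ hg, ih, pow_succ']

lemma extendByZero_conj (hh : h ∈ H) (g : G) :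
    extendByZero χ (h⁻¹ * g * h) = extendByZero χ g := by
  by_cases hg : g ∈ H
  · have hinv : extendByZero χ h⁻¹ * extendByZero χ h = 1 := by
      rw [← extendByZero_mul χ (H.inv_mem hh), inv_mul_cancel, extendByZero_one]
    rw [extendByZero_mul χ (H.mul_mem (H.inv_mem hh) hg), extendByZero_mul χ (H.inv_mem hh),
      mul_right_comm, hinv, one_mul]
  · rw [extendByZero_of_notMem χ hg, extendByZero_of_notMem]
    rwa [H.mul_mem_cancel_right hh, H.mul_mem_cancel_left (H.inv_mem hh)]

lemma norm_extendByZero_le_one [Finite G] (g : G) : ‖extendByZero χ g‖ ≤ 1 := by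
  by_cases hg : g ∈ H
  · have hpow : extendByZero χ g ^ orderOf g = 1 := by
      rw [← extendByZero_pow χ hg, pow_orderOf_eq_one, extendByZero_one]
    exact (Complex.norm_eq_one_of_pow_eq_one hpow (orderOf_pos g).ne').le
  · simp [extendByZero_of_notMem χ hg]

/-- The diagonal entry of `g` at the coset `xH` in the monomial representation of `G` induced
from `χ`: it is `χ (x⁻¹ g x)` if `g` fixes the coset and `0` otherwise. -/
noncomputable def inducedDiag (g : G) : G ⧸ H → ℂ :=
  Quotient.lift (fun x => extendByZero χ (x⁻¹ * g * x)) fun x y hxy => by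
    rw [← extendByZero_conj χ (QuotientGroup.leftRel_apply.1 hxy) (x⁻¹ * g * x)]
    congr 1
    group

@[simp]
lemma inducedDiag_mk (g x : G) :
    inducedDiag χ g (x : G ⧸ H) = extendByZero χ (x⁻¹ * g * x) := rfl

lemma inducedDiag_one_eq_one (q : G ⧸ H) : inducedDiag χ 1 q = 1 := by
  induction q using QuotientGroup.induction_on with
  | H x => simp [extendByZero_one]

lemma inducedDiag_ne_zero_iff {q : G ⧸ H} : inducedDiag χ g q ≠ 0 ↔ g • q = q := by
  induction q using QuotientGroup.induction_on with
  | H x =>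
    rw [inducedDiag_mk, extendByZero_ne_zero_iff, MulAction.Quotient.smul_coe, eq_comm,
      QuotientGroup.eq, smul_eq_mul, mul_assoc]

lemma inducedDiag_mul {q : G ⧸ H} (hg : g • q = q) (k : G) :
    inducedDiag χ (g * k) q = inducedDiag χ g q * inducedDiag χ k q := by
  rw [← inducedDiag_ne_zero_iff χ] at hg
  induction q using QuotientGroup.induction_on with
  | H x =>
    rw [inducedDiag_mk, extendByZero_ne_zero_iff] at hg
    rw [inducedDiag_mk, inducedDiag_mk, inducedDiag_mk, ← extendByZero_mul χ hg]
    congr 1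
    group

lemma inducedDiag_pow {q : G ⧸ H} (hg : g • q = q) (n : ℕ) :
    inducedDiag χ (g ^ n) q = inducedDiag χ g q ^ n := by
  induction n with
  | zero => simp [inducedDiag_one_eq_one]
  | succ n ih => rw [pow_succ', inducedDiag_mul χ hg, ih, pow_succ']

lemma norm_inducedDiag_le_one [Finite G] (g : G) (q : G ⧸ H) : ‖inducedDiag χ g q‖ ≤ 1 := by
  induction q using QuotientGroup.induction_on with
  | H x => exact norm_extendByZero_le_one χ _

variable [Fintype (G ⧸ H)] [Fintype (G ⧸ H')]

/-- The character of `G` induced from the linear character `χ` of a subgroup. -/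
noncomputable def inducedCharacter (g : G) : ℂ := ∑ q : G ⧸ H, inducedDiag χ g q

lemma inducedCharacter_one : inducedCharacter χ 1 = Fintype.card (G ⧸ H) := by
  simp [inducedCharacter, inducedDiag_one_eq_one]

lemma inducedDiag_eq_one_of_inducedCharacter_eq_card [Finite G]
    (hg : inducedCharacter χ g = Fintype.card (G ⧸ H)) (q : G ⧸ H) : inducedDiag χ g q = 1 := by
  have hle (q : G ⧸ H) : (inducedDiag χ g q).re ≤ 1 :=
    (Complex.re_le_norm _).trans (norm_inducedDiag_le_one χ g q)
  have hsum : ∑ q : G ⧸ H, (inducedDiag χ g q).re = ∑ _q : G ⧸ H, 1 := by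
    rw [← Complex.re_sum, ← inducedCharacter, hg]
    simp
  have hre : (inducedDiag χ g q).re = 1 :=
    (sum_eq_sum_iff_of_le fun q _ => hle q).1 hsum q (mem_univ q)
  have hnonneg : 0 ≤ inducedDiag χ g q := Complex.re_eq_norm.1 <|
    (Complex.re_le_norm _).antisymm (hre ▸ norm_inducedDiag_le_one χ g q)
  rw [Complex.eq_re_of_ofReal_le hnonneg, hre, Complex.ofReal_one]

lemma geom_sum₂_eq_ite {F : Type*} [Field F] [DecidableEq F] {ζ w : F} {n : ℕ}
    (hζ : ζ ^ n = 1) (hw : w ^ n = 1) :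
    ∑ i ∈ range n, w ^ i * ζ ^ (n - 1 - i) = if w = ζ then n * ζ ^ (n - 1) else 0 := by
  split_ifs with h
  · subst h
    rw [sum_congr rfl fun i hi => (pow_add w i (n - 1 - i)).symm.trans <|
        congrArg (w ^ ·) (Nat.add_sub_cancel' (Nat.le_sub_one_of_lt (mem_range.1 hi)))]
    simp
  · have hmul := (Commute.all w ζ).geom_sum₂_mul n
    rw [hw, hζ, sub_self] at hmul
    exact (mul_eq_zero.1 hmul).resolve_right (sub_ne_zero.2 h)

open scoped Classical in
lemma sum_mul_inducedCharacter_pow_mul {γ : G} {ζ : ℂ} {n : ℕ} (hζ : ζ ^ n = 1)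
    (hγ : ∀ q : G ⧸ H, γ • q = q) (hpow : ∀ q : G ⧸ H, inducedDiag χ γ q ^ n = 1) (g : G) :
    ∑ i ∈ range n, ζ ^ (n - 1 - i) * inducedCharacter χ (γ ^ i * g) =
      n * ζ ^ (n - 1) * ∑ q : G ⧸ H with inducedDiag χ γ q = ζ, inducedDiag χ g q := by
  have hfix (i : ℕ) (q : G ⧸ H) : γ ^ i • q = q :=
    (MulAction.stabilizer G q).pow_mem (hγ q) i
  simp only [inducedCharacter, mul_sum]
  rw [sum_comm, sum_filter]
  refine sum_congr rfl fun q _ => ?_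
  calc ∑ i ∈ range n, ζ ^ (n - 1 - i) * inducedDiag χ (γ ^ i * g) q
      = (∑ i ∈ range n, inducedDiag χ γ q ^ i * ζ ^ (n - 1 - i)) * inducedDiag χ g q := by
        rw [sum_mul]
        refine sum_congr rfl fun i _ => ?_
        rw [inducedDiag_mul χ (hfix i q), inducedDiag_pow χ (hγ q)]
        ring
    _ = _ := by rw [geom_sum₂_eq_ite hζ (hpow q), ite_mul, zero_mul]

lemma le_card_smul_ne_of_pow_prime_fixes {α : Type*} [MulAction G α] [Fintype α]
    [DecidableEq α] {γ : G} {p : ℕ} [Fact p.Prime] (hp : ∀ a : α, γ ^ p • a = a) {a : α}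
    (ha : γ • a ≠ a) : p ≤ #{a : α | γ • a ≠ a} := by
  have hmod : Fintype.card α ≡ Fintype.card (Function.fixedPoints (γ • · : α → α)) [MOD p] := by
    refine Equiv.Perm.card_fixedPoints_modEq (f := (γ • · : α → α)) (n := 1) ?_
    funext b
    rw [pow_one]
    change (γ • · : α → α)^[p] b = b
    rw [smul_iterate]
    exact hp b
  have hfixed : Fintype.card (Function.fixedPoints (γ • · : α → α)) = #{a : α | γ • a = a} :=
    Fintype.card_subtype _
  have hsplit := card_filter_add_card_filter_not (s := (univ : Finset α)) fun a => γ • a = a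
  rw [hfixed, ← card_univ, ← hsplit] at hmod
  exact Nat.le_of_dvd (card_pos.2 ⟨a, by simpa using ha⟩)
    ((Nat.modEq_zero_iff_dvd).1 (Nat.ModEq.add_left_cancel' _ hmod))

lemma card_sub_two_le_re_inducedCharacter [Finite G] {γ : G}
    (hone : ∀ q : G ⧸ H, q ≠ (1 : G) → inducedDiag χ γ q = 1) :
    (Fintype.card (G ⧸ H) : ℝ) - 2 ≤ (inducedCharacter χ γ).re := by
  classical
  calc (Fintype.card (G ⧸ H) : ℝ) - 2
      = ∑ q : G ⧸ H, (1 - if q = (1 : G) then (2 : ℝ) else 0) := by simp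
    _ ≤ ∑ q : G ⧸ H, (inducedDiag χ γ q).re := sum_le_sum fun q _ => by
        split_ifs with hq
        · linarith [(abs_le.1 ((Complex.abs_re_le_norm _).trans
            (norm_inducedDiag_le_one χ γ q))).1]
        · simp [hone q hq]
    _ = (inducedCharacter χ γ).re := (Complex.re_sum _ _).symm

lemma re_inducedCharacter_le_card_sub [Finite G] [DecidableEq (G ⧸ H)] (γ : G) :
    (inducedCharacter χ γ).re ≤ Fintype.card (G ⧸ H) - #{q : G ⧸ H | γ • q ≠ q} := by
  calc (inducedCharacter χ γ).re
      = ∑ q : G ⧸ H, (inducedDiag χ γ q).re := Complex.re_sum _ _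
    _ ≤ ∑ q : G ⧸ H, (1 - if γ • q ≠ q then (1 : ℝ) else 0) := sum_le_sum fun q _ => by
        split_ifs with hq
        · simp [not_ne_iff.1 (mt (inducedDiag_ne_zero_iff χ).1 hq)]
        · simpa using (Complex.re_le_norm _).trans (norm_inducedDiag_le_one χ γ q)
    _ = Fintype.card (G ⧸ H) - #{q : G ⧸ H | γ • q ≠ q} := by
        rw [sum_sub_distrib, sum_boole]
        simp

/-- The values `1, …, 1, ζ` of `γ` on the cosets of `H` force `γ` to fix every coset of `H'`: a
moved coset lies in an orbit of length at least three, which costs more than the one deviating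
value `ζ` can account for. -/
lemma smul_eq_of_inducedCharacter_eq [Finite G] (hχ : inducedCharacter χ = inducedCharacter χ')
    {γ : G} {p : ℕ} [Fact p.Prime] (hp : 2 < p)
    (hone : ∀ q : G ⧸ H, q ≠ (1 : G) → inducedDiag χ γ q = 1)
    (hfix : ∀ q : G ⧸ H', γ ^ p • q = q) (q : G ⧸ H') : γ • q = q := by
  classical
  by_contra hq
  have hcard : (Fintype.card (G ⧸ H) : ℝ) = Fintype.card (G ⧸ H') := by
    have := congrFun hχ 1
    rw [inducedCharacter_one, inducedCharacter_one] at this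
    exact_mod_cast this
  have hlower := card_sub_two_le_re_inducedCharacter χ hone
  have hupper := re_inducedCharacter_le_card_sub χ' γ
  have hmoved : ((p : ℕ) : ℝ) ≤ #{q : G ⧸ H' | γ • q ≠ q} := by
    exact_mod_cast le_card_smul_ne_of_pow_prime_fixes hfix hq
  rw [hχ, hcard] at hlower
  have : (2 : ℝ) < p := by exact_mod_cast hp
  linarith

/-- Weighting the values of the induced characters at `γ ^ i * g` by powers of `ζ = χ γ` isolates
the cosets on which `γ` acts by `ζ`; there is exactly one of these for `χ`, hence also for `χ'`. -/
theorem exists_extendByZero_eq_conj_of_inducedCharacter_eq [Finite G]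
    (hχ : inducedCharacter χ = inducedCharacter χ') {γ : G} {p : ℕ} [Fact p.Prime] (hp : 2 < p)
    (hone : ∀ q : G ⧸ H, q ≠ (1 : G) → inducedDiag χ γ q = 1)
    (hne : extendByZero χ γ ≠ 1) (hpow : extendByZero χ γ ^ p = 1) :
    ∃ z : G, ∀ g, extendByZero χ g = extendByZero χ' (z⁻¹ * g * z) := by
  classical
  set ζ := extendByZero χ γ
  have hp0 : p ≠ 0 := by lia
  have hcoset : inducedDiag χ γ ((1 : G) : G ⧸ H) = ζ := by simp [ζ]
  have hdiag_pow (q : G ⧸ H) : inducedDiag χ γ q ^ p = 1 := by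
    by_cases hq : q = (1 : G)
    · rw [hq, hcoset, hpow]
    · rw [hone q hq, one_pow]
  have hfix (q : G ⧸ H) : γ • q = q :=
    (inducedDiag_ne_zero_iff χ).1 fun h0 => by
      simpa [h0, hp0] using hdiag_pow q
  have hdiag_pow' (q : G ⧸ H') : inducedDiag χ' (γ ^ p) q = 1 := by
    refine inducedDiag_eq_one_of_inducedCharacter_eq_card χ' ?_ q
    rw [← hχ, ← inducedCharacter_one, ← hχ, inducedCharacter_one, inducedCharacter]
    simp [inducedDiag_pow χ (hfix _), hdiag_pow]
  have hfix' : ∀ q : G ⧸ H', γ • q = q := smul_eq_of_inducedCharacter_eq χ χ' hχ hp hone fun q =>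
    (inducedDiag_ne_zero_iff χ').1 (by simp [hdiag_pow' q])
  have hfilter : ({q : G ⧸ H | inducedDiag χ γ q = ζ} : Finset (G ⧸ H)) = {((1 : G) : G ⧸ H)} := by
    ext q
    rw [mem_filter_univ, mem_singleton]
    refine ⟨fun hq => by_contra fun hq1 => hne (hq ▸ hone q hq1), fun hq => hq ▸ hcoset⟩
  have hsum (g : G) :
      ∑ q : G ⧸ H' with inducedDiag χ' γ q = ζ, inducedDiag χ' g q = extendByZero χ g := by
    have h := sum_mul_inducedCharacter_pow_mul χ hpow hfix hdiag_pow g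
    rw [hχ, sum_mul_inducedCharacter_pow_mul χ' hpow hfix' fun q => by
      rw [← inducedDiag_pow χ' (hfix' q), hdiag_pow'], hfilter, sum_singleton] at h
    exact mul_left_cancel₀ (mul_ne_zero (Nat.cast_ne_zero.2 hp0)
      (pow_ne_zero _ (ne_zero_pow hp0 (hpow ▸ one_ne_zero)))) (by simpa [ζ] using h)
  obtain ⟨q, hq⟩ : ∃ q : G ⧸ H', ({q : G ⧸ H' | inducedDiag χ' γ q = ζ} : Finset _) = {q} := by
    rw [← card_eq_one]
    have h := hsum 1
    simpa [inducedDiag_one_eq_one, extendByZero_one] using h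
  obtain ⟨z, rfl⟩ := QuotientGroup.mk_surjective q
  exact ⟨z, fun g => by rw [← hsum g, hq, sum_singleton, inducedDiag_mk]⟩

end InducedCharacter

section EulerProductLog

open Filter

variable {ι ι' : Type*}

/-- The conditions on norms `q i` and coefficients `c i` under which the degree-one Euler product
`∏ (1 - c i * q i ^ (-s))⁻¹` converges absolutely for `1 < s`. -/
structure IsEulerData (q : ι → ℕ) (c : ι → ℂ) : Prop where
  two_le : ∀ i, 2 ≤ q i
  norm_coeff_le_one : ∀ i, ‖c i‖ ≤ 1
  summable : ∀ s : ℝ, 1 < s → Summable fun i => (q i : ℝ) ^ (-s)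

/-- The `n`-th coefficient of the Dirichlet series of the logarithm of the Euler product
`∏ (1 - c i * q i ^ (-s))⁻¹`. The pair `(i, m)` stands for the term of exponent `m + 1` of the
logarithm of the factor at `i`. -/
noncomputable def logCoeff (q : ι → ℕ) (c : ι → ℂ) (n : ℕ) : ℂ :=
  ∑' x : (fun x : ι × ℕ => q x.1 ^ (x.2 + 1)) ⁻¹' {n}, c x.1.1 ^ (x.1.2 + 1) / ((x.1.2 : ℂ) + 1)

lemma natCast_rpow_neg_le_half {n : ℕ} (hn : 2 ≤ n) {s : ℝ} (hs : 1 ≤ s) :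
    (n : ℝ) ^ (-s) ≤ 1 / 2 := by
  have h2 : (2 : ℝ) ≤ n := by exact_mod_cast hn
  calc (n : ℝ) ^ (-s) ≤ (n : ℝ) ^ (-1 : ℝ) :=
        Real.rpow_le_rpow_of_exponent_le (by linarith) (by linarith)
    _ = (n : ℝ)⁻¹ := Real.rpow_neg_one _
    _ ≤ 1 / 2 := by rw [one_div]; exact inv_anti₀ two_pos h2

lemma log_one_sub_inv_of_norm_lt_one {z : ℂ} (hz : ‖z‖ < 1) :
    Complex.log (1 - z)⁻¹ = -Complex.log (1 - z) :=
  Complex.log_inv _ <| Complex.slitPlane_arg_ne_pi <| by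
    simpa [sub_eq_add_neg] using Complex.mem_slitPlane_of_norm_lt_one (z := -z) (by simpa)

lemma logCoeff_of_preimage_eq_empty {q : ι → ℕ} (c : ι → ℂ) {n : ℕ}
    (h : ∀ i m, q i ^ (m + 1) ≠ n) : logCoeff q c n = 0 := by
  have : IsEmpty ((fun x : ι × ℕ => q x.1 ^ (x.2 + 1)) ⁻¹' {n}) :=
    ⟨fun x => h x.1.1 x.1.2 x.2⟩
  rw [logCoeff, tsum_empty]

namespace IsEulerData

variable {q : ι → ℕ} {c : ι → ℂ} {q' : ι' → ℕ} {c' : ι' → ℂ}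

lemma logCoeff_one (h : IsEulerData q c) : logCoeff q c 1 = 0 :=
  logCoeff_of_preimage_eq_empty c fun i m =>
    (Nat.one_lt_pow m.succ_ne_zero (h.two_le i)).ne'

lemma norm_mul_cpow_le (h : IsEulerData q c) (s : ℝ) (i : ι) :
    ‖c i * (q i : ℂ) ^ (-(s : ℂ))‖ ≤ (q i : ℝ) ^ (-s) := by
  rw [norm_mul, Complex.norm_natCast_cpow_of_pos (two_pos.trans_le (h.two_le i)), Complex.neg_re,
    Complex.ofReal_re]
  exact mul_le_of_le_one_left (by positivity) (h.norm_coeff_le_one i)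

lemma norm_mul_cpow_lt_one (h : IsEulerData q c) {s : ℝ} (hs : 1 ≤ s) (i : ι) :
    ‖c i * (q i : ℂ) ^ (-(s : ℂ))‖ < 1 :=
  ((h.norm_mul_cpow_le s i).trans (natCast_rpow_neg_le_half (h.two_le i) hs)).trans_lt (by norm_num)

lemma summable_log_terms (h : IsEulerData q c) {s : ℝ} (hs : 1 < s) :
    Summable fun x : ι × ℕ =>
      (c x.1 * (q x.1 : ℂ) ^ (-(s : ℂ))) ^ (x.2 + 1) / ((x.2 : ℂ) + 1) := by
  refine Summable.of_norm_bounded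
    (g := fun x : ι × ℕ => (q x.1 : ℝ) ^ (-s) * (1 / 2) ^ x.2) ?_ fun x => ?_
  · exact (h.summable s hs).mul_of_nonneg summable_geometric_two (fun i => by positivity)
      fun m => by positivity
  · have hone : 1 ≤ ‖(x.2 : ℂ) + 1‖ := by
      rw [← Nat.cast_add_one, Complex.norm_natCast]
      exact_mod_cast Nat.le_add_left 1 x.2
    rw [norm_div, norm_pow]
    calc ‖c x.1 * (q x.1 : ℂ) ^ (-(s : ℂ))‖ ^ (x.2 + 1) / ‖(x.2 : ℂ) + 1‖
        ≤ ‖c x.1 * (q x.1 : ℂ) ^ (-(s : ℂ))‖ ^ (x.2 + 1) := div_le_self (by positivity) hone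
      _ ≤ ((q x.1 : ℝ) ^ (-s)) ^ (x.2 + 1) := by gcongr; exact h.norm_mul_cpow_le s x.1
      _ = (q x.1 : ℝ) ^ (-s) * ((q x.1 : ℝ) ^ (-s)) ^ x.2 := pow_succ' _ _
      _ ≤ (q x.1 : ℝ) ^ (-s) * (1 / 2) ^ x.2 := by
        gcongr
        exact natCast_rpow_neg_le_half (h.two_le x.1) hs.le

lemma term_logCoeff (h : IsEulerData q c) (s : ℝ) (n : ℕ) :
    LSeries.term (logCoeff q c) s n = ∑' x : (fun x : ι × ℕ => q x.1 ^ (x.2 + 1)) ⁻¹' {n},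
      (c x.1.1 * (q x.1.1 : ℂ) ^ (-(s : ℂ))) ^ (x.1.2 + 1) / ((x.1.2 : ℂ) + 1) := by
  rcases eq_or_ne n 0 with rfl | hn
  · have : IsEmpty ((fun x : ι × ℕ => q x.1 ^ (x.2 + 1)) ⁻¹' {0}) :=
      ⟨fun x => pow_ne_zero _ (two_pos.trans_le (h.two_le x.1.1)).ne' x.2⟩
    rw [LSeries.term_zero, tsum_empty]
  · rw [LSeries.term_of_ne_zero hn, logCoeff, ← tsum_div_const]
    refine tsum_congr fun ⟨⟨i, m⟩, (hx : q i ^ (m + 1) = n)⟩ => ?_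
    have hpow : (n : ℂ) ^ (s : ℂ) = ((q i : ℂ) ^ (s : ℂ)) ^ (m + 1) := by
      rw [← hx, ← Complex.cpow_nat_mul, Nat.cast_pow, ← Complex.natCast_cpow_natCast_mul]
    rw [hpow, mul_pow, Complex.cpow_neg, inv_pow]
    ring

lemma lseriesHasSum (h : IsEulerData q c) {s : ℝ} (hs : 1 < s) :
    LSeriesHasSum (logCoeff q c) s
      (∑' x : ι × ℕ, (c x.1 * (q x.1 : ℂ) ^ (-(s : ℂ))) ^ (x.2 + 1) / ((x.2 : ℂ) + 1)) := by
  rw [LSeriesHasSum, funext (h.term_logCoeff s)]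
  exact (h.summable_log_terms hs).hasSum.tsum_fiberwise (fun x : ι × ℕ => q x.1 ^ (x.2 + 1))

lemma hasSum_neg_log (h : IsEulerData q c) {s : ℝ} (hs : 1 < s) :
    HasSum (fun i => -Complex.log (1 - c i * (q i : ℂ) ^ (-(s : ℂ))))
      (LSeries (logCoeff q c) s) := by
  rw [(h.lseriesHasSum hs).LSeries_eq]
  refine (h.summable_log_terms hs).hasSum.prod_fiberwise fun i => ?_
  exact_mod_cast Complex.hasSum_taylorSeries_neg_log' (h.norm_mul_cpow_lt_one hs.le i)

lemma tprod_eq_exp_LSeries (h : IsEulerData q c) {s : ℝ} (hs : 1 < s) :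
    ∏' i, (1 - c i * (q i : ℂ) ^ (-(s : ℂ)))⁻¹ = Complex.exp (LSeries (logCoeff q c) s) := by
  have hlog (i : ι) := log_one_sub_inv_of_norm_lt_one (h.norm_mul_cpow_lt_one hs.le i)
  have hne (i : ι) : (1 - c i * (q i : ℂ) ^ (-(s : ℂ)))⁻¹ ≠ 0 := inv_ne_zero fun h0 => by
    simpa [← sub_eq_zero.1 h0] using h.norm_mul_cpow_lt_one hs.le i
  have hsum := h.hasSum_neg_log hs
  simp only [← hlog] at hsum
  rw [← hsum.tsum_eq, Complex.cexp_tsum_eq_tprod hne hsum.summable]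

lemma abscissaOfAbsConv_lt_top (h : IsEulerData q c) :
    LSeries.abscissaOfAbsConv (logCoeff q c) < ⊤ :=
  (h.lseriesHasSum one_lt_two).LSeriesSummable.abscissaOfAbsConv_le.trans_lt (EReal.coe_lt_top _)

lemma eventually_abs_im_LSeries_lt (h : IsEulerData q c) :
    ∀ᶠ s : ℝ in atTop, |(LSeries (logCoeff q c) s).im| < Real.pi := by
  have htendsto := LSeries.tendsto_atTop h.abscissaOfAbsConv_lt_top
  rw [h.logCoeff_one] at htendsto
  filter_upwards [Metric.tendsto_nhds.1 htendsto Real.pi Real.pi_pos] with s hs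
  rw [dist_zero_right] at hs
  exact (Complex.abs_im_le_norm _).trans_lt hs

/-- For large `s` both logarithms lie in the strip where the exponential is injective. -/
theorem logCoeff_eq_of_tprod_eq (h : IsEulerData q c) (h' : IsEulerData q' c')
    (heq : ∀ᶠ s : ℝ in atTop, ∏' i, (1 - c i * (q i : ℂ) ^ (-(s : ℂ)))⁻¹ =
      ∏' i, (1 - c' i * (q' i : ℂ) ^ (-(s : ℂ)))⁻¹) {n : ℕ} (hn : n ≠ 0) :
    logCoeff q c n = logCoeff q' c' n := by
  refine LSeries.eq_of_LSeries_eventually_eq h.abscissaOfAbsConv_lt_top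
    h'.abscissaOfAbsConv_lt_top ?_ hn
  filter_upwards [heq, h.eventually_abs_im_LSeries_lt, h'.eventually_abs_im_LSeries_lt,
    eventually_gt_atTop 1] with s hprod him him' hs
  rw [h.tprod_eq_exp_LSeries hs, h'.tprod_eq_exp_LSeries hs] at hprod
  rw [abs_lt] at him him'
  exact Complex.exp_inj_of_neg_pi_lt_of_le_pi him.1 him.2.le him'.1 him'.2.le hprod

end IsEulerData

end EulerProductLog

section FiniteEulerProduct

open Finset

variable {ι : Type*} {x : ι → ℝ}

lemma hasSum_pi_prod_pow [Fintype ι] (hx0 : ∀ i, 0 ≤ x i) (hx1 : ∀ i, x i < 1) :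
    HasSum (fun f : ι → ℕ => ∏ i, x i ^ f i) (∏ i, (1 - x i)⁻¹) := by
  revert x
  refine Fintype.induction_empty_option (P := fun α _ => ∀ {x : α → ℝ}, (∀ i, 0 ≤ x i) →
    (∀ i, x i < 1) → HasSum (fun f : α → ℕ => ∏ i, x i ^ f i) (∏ i, (1 - x i)⁻¹)) ?_ ?_ ?_ ι
  · intro α β _ e ih x hx0 hx1
    let _ : Fintype α := Fintype.ofEquiv β e.symm
    rw [← e.prod_comp, ← (e.arrowCongr (Equiv.refl ℕ)).hasSum_iff]
    refine (ih (x := x ∘ e) (fun i => hx0 _) fun i => hx1 _).congr_fun fun f => ?_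
    simp [← e.prod_comp]
  · intro x _ _
    simp
  · intro α _ ih x hx0 hx1
    rw [← (Equiv.piOptionEquivProd (β := fun _ : Option α => ℕ)).symm.hasSum_iff,
      Fintype.prod_option]
    have hnone := hasSum_geometric_of_lt_one (hx0 none) (hx1 none)
    have hsome := ih (x := x ∘ some) (fun i => hx0 _) fun i => hx1 _
    refine (hnone.mul hsome (hnone.summable.mul_of_nonneg hsome.summable
      (fun n => pow_nonneg (hx0 _) n)
      fun f => prod_nonneg fun i _ => pow_nonneg (hx0 _) _)).congr_fun fun f => ?_
    simp [Fintype.prod_option]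

lemma hasSum_support_subset_prod_pow (hx0 : ∀ i, 0 ≤ x i) (hx1 : ∀ i, x i < 1) (S : Finset ι) :
    HasSum (fun f : {f : ι →₀ ℕ // ↑f.support ⊆ (S : Set ι)} => f.1.prod fun i n => x i ^ n)
      (∏ i ∈ S, (1 - x i)⁻¹) := by
  rw [← prod_coe_sort S]
  refine ((((Finsupp.restrictSupportEquiv (S : Set ι) ℕ).trans
    Finsupp.equivFunOnFinite).hasSum_iff).2 (hasSum_pi_prod_pow (x := fun i : S => x i)
      (fun i => hx0 _) fun i => hx1 _)).congr_fun fun f => ?_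
  rw [Finsupp.prod_of_support_subset f.1 (mod_cast f.2) _ fun i _ => pow_zero _, ← prod_coe_sort S]
  rfl

lemma isLUB_prod_inv_one_sub_of_hasSum {Z : ℝ} (hx0 : ∀ i, 0 ≤ x i) (hx1 : ∀ i, x i < 1)
    (h : HasSum (fun f : ι →₀ ℕ => f.prod fun i n => x i ^ n) Z) :
    IsLUB (Set.range fun S : Finset ι => ∏ i ∈ S, (1 - x i)⁻¹) Z := by
  classical
  have hnonneg (f : ι →₀ ℕ) : 0 ≤ f.prod fun i n => x i ^ n :=
    prod_nonneg fun i _ => pow_nonneg (hx0 i) _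
  refine ⟨?_, fun b hb => hasSum_le_of_sum_le h fun T => ?_⟩
  · rintro _ ⟨S, rfl⟩
    exact hasSum_le_inj Subtype.val Subtype.val_injective (fun f _ => hnonneg f) (fun f => le_rfl)
      (hasSum_support_subset_prod_pow hx0 hx1 S) h
  · set S := T.biUnion Finsupp.support
    have hT : ∀ f ∈ T, ↑f.support ⊆ (S : Set ι) := fun f hf => mod_cast
      subset_biUnion_of_mem Finsupp.support hf
    calc ∑ f ∈ T, f.prod (fun i n => x i ^ n)
        = ∑ f ∈ T.subtype fun f => ↑f.support ⊆ (S : Set ι), f.1.prod fun i n => x i ^ n :=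
          (sum_subtype_of_mem _ hT).symm
      _ ≤ ∏ i ∈ S, (1 - x i)⁻¹ :=
          sum_le_hasSum _ (fun f _ => hnonneg f) (hasSum_support_subset_prod_pow hx0 hx1 S)
      _ ≤ b := hb ⟨S, rfl⟩

lemma hasSum_neg_log_one_sub_of_isLUB {Z : ℝ} (hx0 : ∀ i, 0 ≤ x i) (hx1 : ∀ i, x i < 1)
    (hZ : IsLUB (Set.range fun S : Finset ι => ∏ i ∈ S, (1 - x i)⁻¹) Z) :
    HasSum (fun i => -Real.log (1 - x i)) (Real.log Z) := by
  have hZ0 : 0 < Z := one_pos.trans_le (hZ.1 ⟨∅, prod_empty⟩)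
  have hprod (S : Finset ι) : 0 < ∏ i ∈ S, (1 - x i)⁻¹ :=
    prod_pos fun i _ => inv_pos.2 (sub_pos.2 (hx1 i))
  have hlog (S : Finset ι) :
      ∑ i ∈ S, -Real.log (1 - x i) = Real.log (∏ i ∈ S, (1 - x i)⁻¹) := by
    rw [Real.log_prod fun i _ => inv_ne_zero (sub_pos.2 (hx1 i)).ne']
    simp only [Real.log_inv]
  refine hasSum_of_isLUB_of_nonneg _
    (fun i => neg_nonneg.2 (Real.log_nonpos (sub_pos.2 (hx1 i)).le (sub_le_self 1 (hx0 i))))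
    ⟨?_, fun b hb => ?_⟩
  · rintro _ ⟨S, rfl⟩
    simpa only [hlog] using Real.log_le_log (hprod S) (hZ.1 ⟨S, rfl⟩)
  · rw [Real.log_le_iff_le_exp hZ0]
    refine hZ.2 ?_
    rintro _ ⟨S, rfl⟩
    exact (Real.log_le_iff_le_exp (hprod S)).1 ((hlog S).symm.trans_le (hb ⟨S, rfl⟩))

end FiniteEulerProduct

section IdealFactorization

open IsDedekindDomain UniqueFactorizationMonoid

variable {R : Type*} [CommRing R]

lemma prod_asIdeal_pow_eq_prod_map_toMultiset (f : HeightOneSpectrum R →₀ ℕ) :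
    (f.prod fun v n => v.asIdeal ^ n) = (f.toMultiset.map HeightOneSpectrum.asIdeal).prod := by
  classical
  rw [Finset.prod_multiset_map_count]
  simp [Finsupp.prod]

variable [IsDedekindDomain R]

lemma prod_asIdeal_pow_injective :
    Function.Injective fun f : HeightOneSpectrum R →₀ ℕ => f.prod fun v n => v.asIdeal ^ n := by
  intro f g h
  have hfactors (u : Multiset (HeightOneSpectrum R)) :
      normalizedFactors (u.map HeightOneSpectrum.asIdeal).prod =
        u.map HeightOneSpectrum.asIdeal :=
    normalizedFactors_prod_of_prime fun I hI => by
      obtain ⟨v, -, rfl⟩ := Multiset.mem_map.1 hI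
      exact v.prime
  simp only [prod_asIdeal_pow_eq_prod_map_toMultiset] at h
  have := congrArg normalizedFactors h
  rw [hfactors, hfactors] at this
  classical
  exact Multiset.toFinsupp.symm.injective
    (Multiset.map_injective (fun v w => HeightOneSpectrum.ext) this)

lemma exists_prod_asIdeal_pow_eq {I : Ideal R} (hI : I ≠ ⊥) :
    ∃ f : HeightOneSpectrum R →₀ ℕ, (f.prod fun v n => v.asIdeal ^ n) = I := by
  have hprime (J : Ideal R) (hJ : J ∈ normalizedFactors I) : Prime J :=
    prime_of_normalized_factor J hJ
  classical
  refine ⟨Multiset.toFinsupp ((normalizedFactors I).attach.map fun J : {J // J ∈ _} =>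
    ⟨J.1, Ideal.isPrime_of_prime (hprime J J.2), (hprime J J.2).ne_zero⟩), ?_⟩
  rw [prod_asIdeal_pow_eq_prod_map_toMultiset, Multiset.toFinsupp_toMultiset, Multiset.map_map]
  exact (congrArg _ (Multiset.attach_map_val _)).trans (Ideal.prod_normalizedFactors_eq_self hI)

end IdealFactorization

section DedekindZeta

open NumberField IsDedekindDomain Filter Topology

lemma le_neg_log_one_sub {x : ℝ} (hx : x < 1) : x ≤ -Real.log (1 - x) := by
  linarith [Real.log_le_sub_one_of_pos (sub_pos.2 hx)]

lemma neg_log_one_sub_le {x : ℝ} (h1 : x ≤ 1 / 2) :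
    -Real.log (1 - x) ≤ x + 2 * x ^ 2 := by
  have hinv : (1 - x)⁻¹ ≤ 1 + x + 2 * x ^ 2 := by
    rw [inv_le_iff_one_le_mul₀ (by linarith)]
    nlinarith [mul_nonneg (sq_nonneg x) (by linarith : 0 ≤ 1 - 2 * x)]
  linarith [Real.one_sub_inv_le_log_of_pos (x := 1 - x) (by linarith)]

variable (K : Type*) [Field K] [NumberField K]

lemma sum_card_absNorm_eq_isBigO :
    (fun n : ℕ => ∑ k ∈ Finset.Icc 1 n,
      (Nat.card {I : Ideal (𝓞 K) // Ideal.absNorm I = k} : ℝ)) =O[atTop]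
        fun n => (n : ℝ) ^ (1 : ℝ) := by
  have hcount (n : ℕ) : ∑ k ∈ Finset.Icc 1 n, Nat.card {I : Ideal (𝓞 K) // Ideal.absNorm I = k} ≤
      Nat.card {I : Ideal (𝓞 K) // Ideal.absNorm I ≤ n} := by
    rw [← Finset.card_preimage_eq_sum_card_image_eq
      fun k _ => Ideal.finite_setOfPred_absNorm_eq k]
    exact Nat.card_mono (Ideal.finite_setOfPred_absNorm_le n) fun I hI =>
      (Finset.mem_Icc.1 (Set.mem_preimage.1 hI)).2
  have hlim := (Ideal.tendsto_norm_le_div_atTop K).comp tendsto_natCast_atTop_atTop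
  simp only [Real.rpow_one]
  refine .trans (.of_norm_le fun n => ?_) (Asymptotics.isBigO_of_div_tendsto_nhds ?_ _ hlim)
  · rw [Real.norm_of_nonneg (by positivity)]
    simpa only [Nat.cast_le, ← Nat.cast_sum] using hcount n
  · filter_upwards [eventually_ne_atTop 0] with n hn h0
    exact absurd h0 (mod_cast hn)

lemma lseriesSummable_card_absNorm_eq {s : ℝ} (hs : 1 < s) :
    LSeriesSummable (fun n => (Nat.card {I : Ideal (𝓞 K) // Ideal.absNorm I = n} : ℂ)) s := by
  exact_mod_cast LSeriesSummable_of_sum_norm_bigO_and_nonneg (sum_card_absNorm_eq_isBigO K)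
    (fun _ => Nat.cast_nonneg _) zero_le_one (s := (s : ℂ)) (by simpa using hs)

lemma term_card_absNorm_eq {s : ℝ} (hs : 0 < s) (n : ℕ) :
    LSeries.term (fun n => (Nat.card {I : Ideal (𝓞 K) // Ideal.absNorm I = n} : ℂ)) s n =
      ((Nat.card {I : Ideal (𝓞 K) // Ideal.absNorm I = n} * (n : ℝ) ^ (-s) : ℝ) : ℂ) := by
  rcases eq_or_ne n 0 with rfl | hn
  · simp [Real.zero_rpow (neg_ne_zero.2 hs.ne')]
  · rw [LSeries.term_of_ne_zero hn, Real.rpow_neg n.cast_nonneg, div_eq_mul_inv]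
    push_cast [Complex.ofReal_cpow n.cast_nonneg]
    rfl

lemma hasSum_absNorm_rpow_neg {s : ℝ} (hs : 1 < s) :
    HasSum (fun I : Ideal (𝓞 K) => (Ideal.absNorm I : ℝ) ^ (-s)) (dedekindZeta K s).re := by
  have hzeta : HasSum _ (dedekindZeta K s).re :=
    Complex.hasSum_re (Summable.hasSum (lseriesSummable_card_absNorm_eq K hs))
  have hterms : HasSum
      (fun n : ℕ => Nat.card {I : Ideal (𝓞 K) // Ideal.absNorm I = n} * (n : ℝ) ^ (-s))
      (dedekindZeta K s).re := by
    simpa only [term_card_absNorm_eq K (one_pos.trans hs), Complex.ofReal_re] using hzeta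
  have hfiber (n : ℕ) : HasSum
      (fun I : {I : Ideal (𝓞 K) // Ideal.absNorm I = n} => (Ideal.absNorm I.1 : ℝ) ^ (-s))
      (Nat.card {I : Ideal (𝓞 K) // Ideal.absNorm I = n} * (n : ℝ) ^ (-s)) := by
    have : Finite {I : Ideal (𝓞 K) // Ideal.absNorm I = n} := Ideal.finite_setOfPred_absNorm_eq n
    have := Fintype.ofFinite {I : Ideal (𝓞 K) // Ideal.absNorm I = n}
    convert hasSum_fintype _ using 1
    rw [Finset.sum_congr rfl fun I _ => by rw [I.2], Finset.sum_const, nsmul_eq_mul,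
      Finset.card_univ, Nat.card_eq_fintype_card]
  rw [← (Equiv.sigmaFiberEquiv (Ideal.absNorm : Ideal (𝓞 K) → ℕ)).hasSum_iff]
  refine HasSum.sigma_of_hasSum hterms hfiber ((summable_sigma_of_nonneg fun _ => by
    simp only [Function.comp_apply]; positivity).2 ⟨fun n => (hfiber n).summable, ?_⟩)
  simpa only [Function.comp_apply, Equiv.sigmaFiberEquiv_apply, (hfiber _).tsum_eq] using
    hterms.summable

variable {K}

lemma two_le_absNorm (v : HeightOneSpectrum (𝓞 K)) : 2 ≤ Ideal.absNorm v.asIdeal := by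
  have h0 : Ideal.absNorm v.asIdeal ≠ 0 := mt Ideal.absNorm_eq_zero_iff.1 v.ne_bot
  have h1 : Ideal.absNorm v.asIdeal ≠ 1 := mt Ideal.absNorm_eq_one_iff.1 v.isPrime.ne_top
  lia

lemma absNorm_rpow_neg_lt_one (v : HeightOneSpectrum (𝓞 K)) {s : ℝ} (hs : 1 ≤ s) :
    (Ideal.absNorm v.asIdeal : ℝ) ^ (-s) < 1 :=
  (natCast_rpow_neg_le_half (two_le_absNorm v) hs).trans_lt (by norm_num)

variable (K)

lemma hasSum_finsupp_prod_absNorm_rpow_neg {s : ℝ} (hs : 1 < s) :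
    HasSum (fun f : HeightOneSpectrum (𝓞 K) →₀ ℕ =>
      f.prod fun v n => ((Ideal.absNorm v.asIdeal : ℝ) ^ (-s)) ^ n) (dedekindZeta K s).re := by
  have hnorm (f : HeightOneSpectrum (𝓞 K) →₀ ℕ) :
      (Ideal.absNorm (f.prod fun v n => v.asIdeal ^ n) : ℝ) ^ (-s) =
        f.prod fun v n => ((Ideal.absNorm v.asIdeal : ℝ) ^ (-s)) ^ n := by
    simp only [Finsupp.prod, map_prod, map_pow, Nat.cast_prod, Nat.cast_pow]
    rw [← Real.finsetProd_rpow _ _ fun v _ => by positivity]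
    exact Finset.prod_congr rfl fun v _ => (Real.rpow_pow_comm (Nat.cast_nonneg _) _ _).symm
  simp only [← hnorm]
  refine (prod_asIdeal_pow_injective.hasSum_iff fun I hI => ?_).2 (hasSum_absNorm_rpow_neg K hs)
  obtain rfl : I = ⊥ := by_contra fun h => hI (exists_prod_asIdeal_pow_eq h)
  simp [Real.zero_rpow (neg_ne_zero.2 (one_pos.trans hs).ne')]

lemma isLUB_eulerProduct_dedekindZeta {s : ℝ} (hs : 1 < s) :
    IsLUB (Set.range fun S : Finset (HeightOneSpectrum (𝓞 K)) =>
      ∏ v ∈ S, (1 - (Ideal.absNorm v.asIdeal : ℝ) ^ (-s))⁻¹) (dedekindZeta K s).re :=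
  isLUB_prod_inv_one_sub_of_hasSum (fun v => by positivity)
    (fun v => absNorm_rpow_neg_lt_one v hs.le) (hasSum_finsupp_prod_absNorm_rpow_neg K hs)

lemma dedekindZeta_re_pos {s : ℝ} (hs : 1 < s) : 0 < (dedekindZeta K s).re :=
  one_pos.trans_le ((isLUB_eulerProduct_dedekindZeta K hs).1 ⟨∅, Finset.prod_empty⟩)

lemma hasSum_log_dedekindZeta_re {s : ℝ} (hs : 1 < s) :
    HasSum (fun v : HeightOneSpectrum (𝓞 K) =>
      -Real.log (1 - (Ideal.absNorm v.asIdeal : ℝ) ^ (-s))) (Real.log (dedekindZeta K s).re) :=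
  hasSum_neg_log_one_sub_of_isLUB (fun v => by positivity)
    (fun v => absNorm_rpow_neg_lt_one v hs.le) (isLUB_eulerProduct_dedekindZeta K hs)

lemma summable_absNorm_rpow_neg {s : ℝ} (hs : 1 < s) :
    Summable fun v : HeightOneSpectrum (𝓞 K) => (Ideal.absNorm v.asIdeal : ℝ) ^ (-s) :=
  (hasSum_log_dedekindZeta_re K hs).summable.of_nonneg_of_le (fun v => by positivity)
    fun v => le_neg_log_one_sub (absNorm_rpow_neg_lt_one v hs.le)

lemma log_dedekindZeta_re_add_log_isBigO_one :
    (fun s : ℝ => Real.log (dedekindZeta K s).re + Real.log (s - 1)) =O[𝓝[>] 1]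
      (1 : ℝ → ℝ) := by
  have hres : Tendsto (fun s : ℝ => (s - 1) * (dedekindZeta K s).re) (𝓝[>] 1)
      (𝓝 (dedekindZeta_residue K)) := by
    refine ((Complex.continuous_re.tendsto _).comp
      (tendsto_sub_one_mul_dedekindZeta_nhdsGT K)).congr fun s => ?_
    rw [Function.comp_apply, ← Complex.ofReal_one, ← Complex.ofReal_sub, Complex.re_ofReal_mul]
  refine ((hres.log (dedekindZeta_residue_ne_zero K)).isBigO_one ℝ).congr' ?_ .rfl
  filter_upwards [self_mem_nhdsWithin] with s (hs : 1 < s)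
  rw [Real.log_mul (sub_pos.2 hs).ne' (dedekindZeta_re_pos K hs).ne', add_comm]

lemma abs_tsum_absNorm_sub_log_dedekindZeta_re_le {s : ℝ} (hs : 1 < s) :
    |∑' v : HeightOneSpectrum (𝓞 K), (Ideal.absNorm v.asIdeal : ℝ) ^ (-s) -
      Real.log (dedekindZeta K s).re| ≤
        ∑' v : HeightOneSpectrum (𝓞 K), 2 * (Ideal.absNorm v.asIdeal : ℝ) ^ (-2 : ℝ) := by
  have hlog := hasSum_log_dedekindZeta_re K hs
  have hsq := (summable_absNorm_rpow_neg K one_lt_two).mul_left 2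
  rw [← hlog.tsum_eq, ← (summable_absNorm_rpow_neg K hs).tsum_sub hlog.summable, ← Real.norm_eq_abs]
  refine tsum_of_norm_bounded hsq.hasSum fun v => ?_
  have hle := neg_log_one_sub_le
    (natCast_rpow_neg_le_half (two_le_absNorm v) hs.le)
  have hge := le_neg_log_one_sub (absNorm_rpow_neg_lt_one v hs.le)
  have hpow : ((Ideal.absNorm v.asIdeal : ℝ) ^ (-s)) ^ 2 ≤
      (Ideal.absNorm v.asIdeal : ℝ) ^ (-2 : ℝ) := by
    rw [← Real.rpow_mul_natCast (by positivity)]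
    exact Real.rpow_le_rpow_of_exponent_le (mod_cast one_le_two.trans (two_le_absNorm v))
      (by push_cast; linarith)
  rw [Real.norm_eq_abs, abs_le]
  constructor <;> linarith

theorem tsum_absNorm_rpow_neg_add_log_isBigO_one :
    (fun s : ℝ => ∑' v : HeightOneSpectrum (𝓞 K), (Ideal.absNorm v.asIdeal : ℝ) ^ (-s) +
      Real.log (s - 1)) =O[𝓝[>] 1] (1 : ℝ → ℝ) := by
  have hsub : (fun s : ℝ => ∑' v : HeightOneSpectrum (𝓞 K), (Ideal.absNorm v.asIdeal : ℝ) ^ (-s) -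
      Real.log (dedekindZeta K s).re) =O[𝓝[>] 1] (1 : ℝ → ℝ) := by
    refine Asymptotics.IsBigO.of_bound
      (∑' v : HeightOneSpectrum (𝓞 K), 2 * (Ideal.absNorm v.asIdeal : ℝ) ^ (-2 : ℝ)) ?_
    filter_upwards [self_mem_nhdsWithin] with s hs
    rw [Pi.one_apply, norm_one, mul_one, Real.norm_eq_abs]
    exact abs_tsum_absNorm_sub_log_dedekindZeta_re_le K hs
  exact (hsub.add (log_dedekindZeta_re_add_log_isBigO_one K)).congr_left fun s => by ring

end DedekindZeta

section ResidueCharacteristic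

open NumberField IsDedekindDomain

variable {K : Type*} [Field K]

/-- The rational prime lying below a maximal ideal of the ring of integers. -/
noncomputable def residueChar (v : HeightOneSpectrum (𝓞 K)) : ℕ :=
  Ideal.absNorm (v.asIdeal.under ℤ)

lemma residueChar_prime (v : HeightOneSpectrum (𝓞 K)) : (residueChar v).Prime :=
  have : NeZero v.asIdeal := ⟨v.ne_bot⟩
  Nat.absNorm_under_prime v.asIdeal

lemma natCast_mem_asIdeal_iff {v : HeightOneSpectrum (𝓞 K)} {n : ℕ} :
    (n : 𝓞 K) ∈ v.asIdeal ↔ residueChar v ∣ n := by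
  rw [← Int.cast_natCast n, Int.cast_mem_ideal_iff, Int.natCast_dvd_natCast, residueChar]

lemma residueChar_eq_iff_natCast_mem {v : HeightOneSpectrum (𝓞 K)} {p : ℕ} (hp : p.Prime) :
    residueChar v = p ↔ (p : 𝓞 K) ∈ v.asIdeal := by
  rw [natCast_mem_asIdeal_iff, Nat.prime_dvd_prime_iff_eq (residueChar_prime v) hp]

lemma liesOver_span_residueChar (v : HeightOneSpectrum (𝓞 K)) :
    v.asIdeal.LiesOver (Ideal.span {(residueChar v : ℤ)}) :=
  Int.liesOver_span_absNorm v.asIdeal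

lemma image_asIdeal_residueChar_eq_subset (p : ℕ) :
    HeightOneSpectrum.asIdeal '' {v : HeightOneSpectrum (𝓞 K) | residueChar v = p} ⊆
      (Ideal.span {(p : ℤ)}).primesOver (𝓞 K) := by
  rintro _ ⟨v, rfl, rfl⟩
  exact ⟨v.isPrime, liesOver_span_residueChar v⟩

variable [NumberField K]

lemma residueChar_pow_inertiaDeg (v : HeightOneSpectrum (𝓞 K)) :
    residueChar v ^ v.asIdeal.inertiaDeg ℤ = Ideal.absNorm v.asIdeal :=
  have := liesOver_span_residueChar v
  Ideal.pow_inertiaDeg _ _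

lemma absNorm_eq_prime_iff {v : HeightOneSpectrum (𝓞 K)} {p : ℕ} (hp : p.Prime) :
    Ideal.absNorm v.asIdeal = p ↔ residueChar v = p ∧ v.asIdeal.inertiaDeg ℤ = 1 := by
  rw [← residueChar_pow_inertiaDeg v]
  exact ⟨fun h => ((Nat.Prime.pow_eq_iff hp).1 h), fun ⟨h1, h2⟩ => by rw [h1, h2, pow_one]⟩

lemma residueChar_sq_le_absNorm {v : HeightOneSpectrum (𝓞 K)}
    (hv : ¬ (Ideal.absNorm v.asIdeal).Prime) : residueChar v ^ 2 ≤ Ideal.absNorm v.asIdeal := by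
  have hdeg : v.asIdeal.inertiaDeg ℤ ≠ 1 := fun h => hv <| by
    rw [← residueChar_pow_inertiaDeg v, h, pow_one]
    exact residueChar_prime v
  have hpos := Ideal.inertiaDeg_pos v.asIdeal ℤ
  rw [← residueChar_pow_inertiaDeg v]
  exact Nat.pow_le_pow_right (residueChar_prime v).pos (by omega)

lemma isMaximal_span_natCast {p : ℕ} (hp : p.Prime) : (Ideal.span {(p : ℤ)}).IsMaximal :=
  ((Ideal.span_singleton_prime (mod_cast hp.ne_zero)).2
    (Nat.prime_iff_prime_int.1 hp)).isMaximal (by simpa using hp.ne_zero)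

lemma ncard_primesOver_le_finrank {p : ℕ} (hp : p.Prime) :
    ((Ideal.span {(p : ℤ)}).primesOver (𝓞 K)).ncard ≤ Module.finrank ℚ K := by
  have := isMaximal_span_natCast hp
  rw [← RingOfIntegers.rank, ← Ideal.sum_ramification_inertia_eq_finrank (Ideal.span {(p : ℤ)}),
    ← Nat.card_coe_set_eq, Nat.card_eq_fintype_card, Fintype.card_eq_sum_ones]
  refine Finset.sum_le_sum fun P _ => Nat.mul_pos ?_ ?_
  · exact Ideal.ramificationIdx_pos _ _
  · exact Ideal.inertiaDeg_pos _ _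

variable (K) in
lemma exists_residueChar_eq {p : ℕ} (hp : p.Prime) :
    ∃ v : HeightOneSpectrum (𝓞 K), residueChar v = p := by
  have := isMaximal_span_natCast hp
  obtain ⟨P, hP⟩ := Ideal.nonempty_primesOver (S := 𝓞 K) (Ideal.span {(p : ℤ)})
  have := hP.2
  refine ⟨⟨P, hP.1, Ideal.ne_bot_of_mem_primesOver (by simpa using hp.ne_zero) hP⟩,
    (residueChar_eq_iff_natCast_mem hp).2 ?_⟩
  rw [← map_natCast (algebraMap ℤ (𝓞 K)) p, ← Ideal.mem_comap]
  exact this.over.le (Ideal.mem_span_singleton_self (p : ℤ))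

variable (K) in
lemma finite_residueChar_eq {p : ℕ} (hp : p.Prime) :
    {v : HeightOneSpectrum (𝓞 K) | residueChar v = p}.Finite := by
  have := isMaximal_span_natCast hp
  exact .of_finite_image ((IsDedekindDomain.primesOver_finite _ _).subset
    (image_asIdeal_residueChar_eq_subset p)) fun _ _ _ _ => HeightOneSpectrum.ext

lemma ncard_residueChar_eq_le {p : ℕ} (hp : p.Prime) :
    {v : HeightOneSpectrum (𝓞 K) | residueChar v = p}.ncard ≤ Module.finrank ℚ K := by
  have := isMaximal_span_natCast hp
  rw [← Set.ncard_image_of_injective _ fun _ _ => HeightOneSpectrum.ext]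
  exact (Set.ncard_le_ncard (image_asIdeal_residueChar_eq_subset p)
    (IsDedekindDomain.primesOver_finite _ _)).trans (ncard_primesOver_le_finrank hp)

variable (K) in
lemma summable_residueChar_sq_inv :
    Summable fun v : HeightOneSpectrum (𝓞 K) => ((residueChar v : ℝ) ^ 2)⁻¹ := by
  classical
  have hs : Summable fun n : ℕ => ((n : ℝ) ^ 2)⁻¹ := Real.summable_nat_pow_inv.2 one_lt_two
  refine summable_of_sum_le (c := ∑' n : ℕ, Module.finrank ℚ K * ((n : ℝ) ^ 2)⁻¹)
    (fun v => by positivity) fun S => ?_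
  rw [Finset.sum_comp (fun n : ℕ => ((n : ℝ) ^ 2)⁻¹) residueChar]
  refine (Finset.sum_le_sum fun n hn => ?_).trans
    ((hs.mul_left _).sum_le_tsum (S.image residueChar) fun n _ => by positivity)
  obtain ⟨v, -, rfl⟩ := Finset.mem_image.1 hn
  rw [nsmul_eq_mul, ← Set.ncard_coe_finset]
  gcongr
  refine (Set.ncard_le_ncard ?_ (finite_residueChar_eq K (residueChar_prime v))).trans
    (ncard_residueChar_eq_le (residueChar_prime v))
  intro w hw
  exact (Finset.mem_filter.1 hw).2

end ResidueCharacteristic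

section PrimeNorm

open NumberField IsDedekindDomain Filter Topology

variable (K : Type*) [Field K] [NumberField K]

/-- The number of maximal ideals of `𝓞 K` of absolute norm `n`. -/
noncomputable def normCount (n : ℕ) : ℕ :=
  {v : HeightOneSpectrum (𝓞 K) | Ideal.absNorm v.asIdeal = n}.ncard

lemma summable_absNorm_inv_of_notMem {S : Set ℕ} (hS : {p | p.Prime ∧ p ∉ S}.Finite) :
    Summable fun v : {v : HeightOneSpectrum (𝓞 K) | Ideal.absNorm v.asIdeal ∉ S} =>
      (Ideal.absNorm v.1.asIdeal : ℝ)⁻¹ := by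
  let T := {v : HeightOneSpectrum (𝓞 K) |
    (Ideal.absNorm v.asIdeal).Prime ∧ Ideal.absNorm v.asIdeal ∉ S}
  have hT : T.Finite :=
    hS.preimage' fun n _ => (Ring.HasFiniteQuotients.finite_absNorm_heightOneSpectrum_le n).subset
      fun v hv => le_of_eq hv
  have hTsum : Summable (T.indicator fun _ => (1 : ℝ)) :=
    summable_of_hasFiniteSupport (hT.subset Set.support_indicator_subset)
  refine ((summable_residueChar_sq_inv K).add hTsum).subtype _ |>.of_nonneg_of_le
    (fun v => by positivity) fun v => ?_
  have hnorm : (1 : ℝ) ≤ Ideal.absNorm v.1.asIdeal := mod_cast one_le_two.trans (two_le_absNorm v.1)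
  have hchar : (0 : ℝ) < residueChar v.1 := mod_cast (residueChar_prime v.1).pos
  by_cases hprime : (Ideal.absNorm v.1.asIdeal).Prime
  · have hvT : v.1 ∈ T := ⟨hprime, v.2⟩
    simp only [Function.comp_apply, Set.indicator_of_mem hvT]
    exact (inv_le_one_of_one_le₀ hnorm).trans (le_add_of_nonneg_left (by positivity))
  · refine (inv_anti₀ (by positivity) ?_).trans
      (le_add_of_nonneg_right (Set.indicator_nonneg (fun _ _ => zero_le_one) _))
    exact_mod_cast residueChar_sq_le_absNorm hprime

lemma tsum_absNorm_rpow_neg_of_mem (S : Set ℕ) {s : ℝ} (hs : 1 < s) :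
    ∑' v : {v : HeightOneSpectrum (𝓞 K) | Ideal.absNorm v.asIdeal ∈ S},
      (Ideal.absNorm v.1.asIdeal : ℝ) ^ (-s) = ∑' n : S, normCount K n * (n : ℝ) ^ (-s) := by
  let norm : {v : HeightOneSpectrum (𝓞 K) | Ideal.absNorm v.asIdeal ∈ S} → S :=
    fun v => ⟨Ideal.absNorm v.1.asIdeal, v.2⟩
  have hsum := (summable_absNorm_rpow_neg K hs).subtype {v | Ideal.absNorm v.asIdeal ∈ S}
  refine (hsum.hasSum.tsum_fiberwise norm).tsum_eq.symm.trans (tsum_congr fun n => ?_)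
  have hcard : Nat.card (norm ⁻¹' {n}) = normCount K n := by
    rw [normCount, ← Nat.card_coe_set_eq]
    exact Nat.card_congr
      { toFun v := ⟨v.1.1, congrArg Subtype.val v.2⟩
        invFun v := ⟨⟨v.1, (congrArg (· ∈ S) v.2).mpr n.2⟩, Subtype.ext v.2⟩
        left_inv _ := rfl
        right_inv _ := rfl }
  have hconst (v : norm ⁻¹' {n}) :
      (Ideal.absNorm v.1.1.asIdeal : ℝ) ^ (-s) = (n : ℝ) ^ (-s) :=
    congrArg (fun m : S => (m : ℝ) ^ (-s)) v.2
  exact (tsum_congr hconst).trans (by rw [tsum_const, nsmul_eq_mul, hcard])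

theorem tsum_normCount_mul_rpow_neg_add_log_isBigO_one {S : Set ℕ}
    (hS : {p | p.Prime ∧ p ∉ S}.Finite) :
    (fun s : ℝ => ∑' n : S, normCount K n * (n : ℝ) ^ (-s) + Real.log (s - 1))
      =O[𝓝[>] 1] (1 : ℝ → ℝ) := by
  have hsum := summable_absNorm_inv_of_notMem K hS
  have hrest : (fun s : ℝ => ∑' v : {v : HeightOneSpectrum (𝓞 K) | Ideal.absNorm v.asIdeal ∉ S},
      (Ideal.absNorm v.1.asIdeal : ℝ) ^ (-s)) =O[𝓝[>] 1] (1 : ℝ → ℝ) := by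
    refine .of_bound (∑' v : {v : HeightOneSpectrum (𝓞 K) | Ideal.absNorm v.asIdeal ∉ S},
      (Ideal.absNorm v.1.asIdeal : ℝ)⁻¹) ?_
    filter_upwards [self_mem_nhdsWithin] with s hs
    rw [Real.norm_of_nonneg (tsum_nonneg fun v => by positivity), Pi.one_apply, norm_one, mul_one]
    refine ((summable_absNorm_rpow_neg K hs).subtype _).tsum_le_tsum (fun v => ?_) hsum
    rw [← Real.rpow_neg_one]
    exact Real.rpow_le_rpow_of_exponent_le (mod_cast one_le_two.trans (two_le_absNorm v.1))
      (neg_le_neg (Set.mem_Ioi.1 hs).le)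
  refine ((tsum_absNorm_rpow_neg_add_log_isBigO_one K).sub hrest).congr' ?_ .rfl
  filter_upwards [self_mem_nhdsWithin] with s hs
  rw [← tsum_absNorm_rpow_neg_of_mem K S hs, add_sub_right_comm,
    ← (summable_absNorm_rpow_neg K hs).tsum_subtype_add_tsum_subtype_compl
      {v | Ideal.absNorm v.asIdeal ∈ S}]
  exact congrArg (· + _) (add_sub_cancel_right _ _)

end PrimeNorm

section PrimeAction

open NumberField IsDedekindDomain
open scoped Pointwise

section Group

variable {R G : Type*} [CommRing R] [Group G] [MulSemiringAction G R]

instance heightOneSpectrumMulAction : MulAction G (HeightOneSpectrum R) where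
  smul g v := ⟨g • v.asIdeal, inferInstance, fun h => v.ne_bot <| by
    rw [← inv_smul_smul g v.asIdeal, h, Ideal.pointwise_smul_def, Ideal.map_bot]⟩
  one_smul _ := HeightOneSpectrum.ext (one_smul _ _)
  mul_smul _ _ _ := HeightOneSpectrum.ext (mul_smul _ _ _)

@[simp]
lemma asIdeal_smul (g : G) (v : HeightOneSpectrum R) : (g • v).asIdeal = g • v.asIdeal := rfl

lemma stabilizer_asIdeal (v : HeightOneSpectrum R) :
    MulAction.stabilizer G v.asIdeal = MulAction.stabilizer G v := by
  ext g
  rw [MulAction.mem_stabilizer_iff, MulAction.mem_stabilizer_iff]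
  exact ⟨fun h => HeightOneSpectrum.ext h, fun h => congrArg HeightOneSpectrum.asIdeal h⟩

lemma smul_mul_inv_mem_inertia_iff {g τ : G} {I : Ideal R} :
    g * τ * g⁻¹ ∈ (g • I).inertia G ↔ τ ∈ I.inertia G := by
  simp only [Ideal.inertia, AddSubgroup.mem_inertia, Submodule.mem_toAddSubgroup]
  rw [(MulAction.surjective g).forall]
  simp only [mul_smul, inv_smul_smul, ← smul_sub, Ideal.smul_mem_pointwise_smul_iff]

/-- Each nontrivial `τ` moves some `x`, and the primes at which `τ` is inert divide `τ • x - x`. -/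
lemma finite_inertia_ne_bot [IsDedekindDomain R] [Finite G] [FaithfulSMul G R] :
    {v : HeightOneSpectrum R | v.asIdeal.inertia G ≠ ⊥}.Finite := by
  have hmoved (τ : {τ : G // τ ≠ 1}) : ∃ x : R, τ.1 • x - x ≠ 0 := by
    by_contra! hfix
    exact τ.2 (FaithfulSMul.eq_of_smul_eq_smul fun x : R => by rw [one_smul, ← sub_eq_zero, hfix x])
  choose x hx using hmoved
  refine (Set.finite_iUnion fun τ => Ideal.finite_factors (I := Ideal.span {τ.1 • x τ - x τ})
    (by simpa using hx τ)).subset fun v hv => ?_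
  obtain ⟨⟨τ, hτ⟩, hτ_ne⟩ := Subgroup.ne_bot_iff_exists_ne_one.1 hv
  refine Set.mem_iUnion.2 ⟨⟨τ, fun h => hτ_ne (Subtype.ext h)⟩, Ideal.dvd_span_singleton.2 (hτ _)⟩

end Group

variable {K L : Type*} [Field K] [Field L]

lemma residueChar_smul {G : Type*} [Group G] [MulSemiringAction G (𝓞 L)] (g : G)
    (v : HeightOneSpectrum (𝓞 L)) : residueChar (g • v) = residueChar v := by
  rw [residueChar_eq_iff_natCast_mem (residueChar_prime v), asIdeal_smul,
    ← map_natCast (MulSemiringAction.toRingHom G (𝓞 L) g), MulSemiringAction.toRingHom_apply,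
    Ideal.smul_mem_pointwise_smul_iff, natCast_mem_asIdeal_iff]

variable [Algebra K L]

variable (K) in
/-- The maximal ideal of `𝓞 K` lying below a maximal ideal of `𝓞 L`. -/
def primeBelow (w : HeightOneSpectrum (𝓞 L)) : HeightOneSpectrum (𝓞 K) :=
  ⟨w.asIdeal.under (𝓞 K), inferInstance, Ideal.under_ne_bot (𝓞 K) w.ne_bot⟩

lemma residueChar_primeBelow (w : HeightOneSpectrum (𝓞 L)) :
    residueChar (primeBelow K w) = residueChar w := by
  rw [residueChar_eq_iff_natCast_mem (residueChar_prime w), primeBelow, Ideal.mem_comap,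
    map_natCast, natCast_mem_asIdeal_iff]

variable (L) in
lemma primeBelow_surjective :
    Function.Surjective (primeBelow K : HeightOneSpectrum (𝓞 L) → HeightOneSpectrum (𝓞 K)) := by
  intro v
  have hinj : RingHom.ker (algebraMap (𝓞 K) (𝓞 L)) = ⊥ :=
    (RingHom.injective_iff_ker_eq_bot _).1 (FaithfulSMul.algebraMap_injective (𝓞 K) (𝓞 L))
  obtain ⟨Q, hQ, hQv⟩ := Ideal.exists_ideal_over_prime_of_isIntegral_of_isDomain (S := 𝓞 L)
    v.asIdeal (hinj.trans_le bot_le)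
  have hQ_ne : Q ≠ ⊥ := by
    rintro rfl
    exact v.ne_bot (hQv.symm.trans hinj)
  exact ⟨⟨Q, hQ, hQ_ne⟩, HeightOneSpectrum.ext hQv⟩

variable [NumberField L]

lemma exists_smul_eq_of_residueChar_eq [IsGalois ℚ L]
    {w w' : HeightOneSpectrum (𝓞 L)} (h : residueChar w = residueChar w') :
    ∃ σ : Gal(L/ℚ), σ • w = w' := by
  have hunder (v : HeightOneSpectrum (𝓞 L)) :
      v.asIdeal.under ℤ = Ideal.span {(residueChar v : ℤ)} :=
    (Int.ideal_span_absNorm_eq_self _).symm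
  obtain ⟨σ, hσ⟩ := Algebra.IsInvariant.exists_smul_of_under_eq ℤ (𝓞 L) Gal(L/ℚ) w.asIdeal
    w'.asIdeal (by rw [hunder, hunder, h])
  exact ⟨σ, HeightOneSpectrum.ext hσ.symm⟩

variable [NumberField K] [IsGalois K L]

lemma exists_smul_eq_of_primeBelow_eq {w w' : HeightOneSpectrum (𝓞 L)}
    (h : primeBelow K w = primeBelow K w') : ∃ σ : Gal(L/K), σ • w = w' := by
  obtain ⟨σ, hσ⟩ := Algebra.IsInvariant.exists_smul_of_under_eq (𝓞 K) (𝓞 L) Gal(L/K) w.asIdeal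
    w'.asIdeal (congrArg HeightOneSpectrum.asIdeal h)
  exact ⟨σ, HeightOneSpectrum.ext hσ.symm⟩

lemma primeBelow_smul (σ : Gal(L/K)) (w : HeightOneSpectrum (𝓞 L)) :
    primeBelow K (σ • w) = primeBelow K w :=
  HeightOneSpectrum.ext (Ideal.under_smul _ _ _)

end PrimeAction

section Frobenius

open NumberField IsDedekindDomain
open scoped Pointwise

section ResidueField

variable {K : Type*} [Field K] [NumberField K]

/-- A generator of the residue field's unit group has order `p ^ f - 1`. -/
lemma inertiaDeg_dvd_of_forall_pow_sub_self_mem (v : HeightOneSpectrum (𝓞 K)) {i : ℕ}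
    (h : ∀ y : 𝓞 K, y ^ residueChar v ^ i - y ∈ v.asIdeal) : v.asIdeal.inertiaDeg ℤ ∣ i := by
  let _ := Ideal.Quotient.field v.asIdeal
  set p := residueChar v
  set f := v.asIdeal.inertiaDeg ℤ
  have hp : 1 < p := (residueChar_prime v).one_lt
  obtain ⟨g, hg⟩ := IsCyclic.exists_ofOrder_eq_natCard (α := (𝓞 K ⧸ v.asIdeal)ˣ)
  have horder : orderOf g = p ^ f - 1 := by
    rw [hg, Nat.card_units, residueChar_pow_inertiaDeg, Ideal.absNorm_apply,
      Submodule.cardQuot_apply]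
  have hpow : g ^ p ^ i = g := by
    obtain ⟨y, hy⟩ := Ideal.Quotient.mk_surjective (I := v.asIdeal) (g : 𝓞 K ⧸ v.asIdeal)
    exact Units.ext (by rw [Units.val_pow_eq_pow_val, ← hy, ← map_pow, Ideal.Quotient.eq.2 (h y)])
  have hdvd : p ^ f - 1 ∣ p ^ i - 1 := by
    rw [← horder, orderOf_dvd_iff_pow_eq_one]
    refine mul_right_cancel (b := g) ?_
    rw [pow_sub_one_mul (pow_pos hp.le i).ne', hpow, one_mul]
  have hgcd : p ^ f.gcd i - 1 = p ^ f - 1 := by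
    rw [← Nat.pow_sub_one_gcd_pow_sub_one, Nat.gcd_eq_left hdvd]
  refine Nat.gcd_eq_left_iff_dvd.1 (Nat.pow_right_injective hp ?_)
  exact Nat.sub_one_cancel (pow_pos hp.le _) (pow_pos hp.le _) hgcd

end ResidueField

section Congruence

variable {R G : Type*} [CommRing R] [Group G] [MulSemiringAction G R] {I : Ideal R} {g g' : G}
  {n : ℕ}

lemma pow_smul_sub_pow_mem (h : ∀ y : R, g • y - y ^ n ∈ I) (i : ℕ) (y : R) :
    g ^ i • y - y ^ n ^ i ∈ I := by
  induction i generalizing y with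
  | zero => simp
  | succ i ih =>
    have hsucc := I.add_mem (ih (g • y)) (I.mem_of_dvd (sub_dvd_pow_sub_pow _ _ (n ^ i)) (h y))
    rwa [sub_add_sub_cancel, ← mul_smul, ← pow_succ, ← pow_mul, ← pow_succ'] at hsucc

lemma eq_of_smul_sub_pow_mem (hI : I.inertia G = ⊥) (h : ∀ y : R, g • y - y ^ n ∈ I)
    (h' : ∀ y : R, g' • y - y ^ n ∈ I) : g = g' := by
  have hmem : g * g'⁻¹ ∈ I.inertia G := fun y => by
    have hsub := I.sub_mem (h (g'⁻¹ • y)) (h' (g'⁻¹ • y))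
    rwa [sub_sub_sub_cancel_right, ← mul_smul, smul_inv_smul] at hsub
  rwa [hI, Subgroup.mem_bot, mul_inv_eq_one] at hmem

end Congruence

variable {K Ω : Type*} [Field K] [NumberField K] [Field Ω] [NumberField Ω] [Algebra K Ω]

variable (K Ω) in
/-- The subgroup of `Gal(Ω/ℚ)` corresponding to (the image of) `K`. -/
noncomputable def galoisSubgroup : Subgroup Gal(Ω/ℚ) :=
  (AlgEquiv.restrictScalarsHom ℚ : Gal(Ω/K) →* Gal(Ω/ℚ)).range

lemma mem_galoisSubgroup_iff {g : Gal(Ω/ℚ)} :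
    g ∈ galoisSubgroup K Ω ↔ ∀ k : K, g (algebraMap K Ω k) = algebraMap K Ω k := by
  refine ⟨?_, fun h => ⟨AlgEquiv.ofRingEquiv (f := g.toRingEquiv) h, rfl⟩⟩
  rintro ⟨σ, rfl⟩
  exact σ.commutes

lemma primeBelow_smul_of_mem_galoisSubgroup [IsGalois K Ω] {g : Gal(Ω/ℚ)}
    (hg : g ∈ galoisSubgroup K Ω) (w : HeightOneSpectrum (𝓞 Ω)) :
    primeBelow K (g • w) = primeBelow K w := by
  obtain ⟨σ, rfl⟩ := hg
  exact primeBelow_smul σ w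

/-- `F` is the Frobenius element at a prime `Q` of a Galois number field unramified over `ℚ`. -/
structure IsUnramifiedFrobenius (Q : HeightOneSpectrum (𝓞 Ω)) (F : Gal(Ω/ℚ)) : Prop where
  isArithFrobAt : IsArithFrobAt ℤ F Q.asIdeal
  inertia_eq_bot : Q.asIdeal.inertia Gal(Ω/ℚ) = ⊥

lemma exists_isUnramifiedFrobenius [IsGalois ℚ Ω] {Q : HeightOneSpectrum (𝓞 Ω)}
    (hQ : Q.asIdeal.inertia Gal(Ω/ℚ) = ⊥) : ∃ F, IsUnramifiedFrobenius Q F :=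
  (IsArithFrobAt.exists_of_isInvariant ℤ Gal(Ω/ℚ) Q.asIdeal).imp fun _ hF => ⟨hF, hQ⟩

namespace IsUnramifiedFrobenius

variable {Q : HeightOneSpectrum (𝓞 Ω)} {F : Gal(Ω/ℚ)}

lemma smul (h : IsUnramifiedFrobenius Q F) (x : Gal(Ω/ℚ)) :
    IsUnramifiedFrobenius (x • Q) (x * F * x⁻¹) where
  isArithFrobAt := h.isArithFrobAt.conj x
  inertia_eq_bot := by
    refine (Subgroup.eq_bot_iff_forall _).2 fun τ hτ => ?_
    have hconj : x * (x⁻¹ * τ * x) * x⁻¹ = τ := by group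
    rw [← hconj, asIdeal_smul, smul_mul_inv_mem_inertia_iff, h.inertia_eq_bot,
      Subgroup.mem_bot] at hτ
    rw [← hconj, hτ, mul_one, mul_inv_cancel]

lemma pow_smul_sub_mem (h : IsUnramifiedFrobenius Q F) (i : ℕ) (y : 𝓞 Ω) :
    F ^ i • y - y ^ residueChar Q ^ i ∈ Q.asIdeal :=
  pow_smul_sub_pow_mem h.isArithFrobAt i y

variable (K) in
lemma restrictScalars_eq_pow (h : IsUnramifiedFrobenius Q F) [IsGalois K Ω] {σ : Gal(Ω/K)}
    (hσ : IsArithFrobAt (𝓞 K) σ Q.asIdeal) :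
    σ.restrictScalars ℚ = F ^ (primeBelow K Q).asIdeal.inertiaDeg ℤ := by
  have hcard : residueChar Q ^ (primeBelow K Q).asIdeal.inertiaDeg ℤ =
      Nat.card (𝓞 K ⧸ Q.asIdeal.under (𝓞 K)) := by
    rw [← residueChar_primeBelow (K := K), residueChar_pow_inertiaDeg]
    rfl
  refine eq_of_smul_sub_pow_mem h.inertia_eq_bot hσ fun y => ?_
  rw [← hcard]
  exact h.pow_smul_sub_mem _ y

variable [IsGalois ℚ Ω]

lemma pow_inertiaDeg_mem_galoisSubgroup (h : IsUnramifiedFrobenius Q F) :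
    F ^ (primeBelow K Q).asIdeal.inertiaDeg ℤ ∈ galoisSubgroup K Ω := by
  have : IsGalois K Ω := IsGalois.tower_top_of_isGalois ℚ K Ω
  obtain ⟨σ, hσ⟩ := IsArithFrobAt.exists_of_isInvariant (𝓞 K) Gal(Ω/K) Q.asIdeal
  exact ⟨σ, h.restrictScalars_eq_pow K hσ⟩

lemma pow_mem_galoisSubgroup_iff (h : IsUnramifiedFrobenius Q F) {i : ℕ} :
    F ^ i ∈ galoisSubgroup K Ω ↔ (primeBelow K Q).asIdeal.inertiaDeg ℤ ∣ i := by
  refine ⟨fun hi => inertiaDeg_dvd_of_forall_pow_sub_self_mem _ fun y => ?_, ?_⟩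
  · have hfix : F ^ i • algebraMap (𝓞 K) (𝓞 Ω) y = algebraMap (𝓞 K) (𝓞 Ω) y :=
      RingOfIntegers.ext (mem_galoisSubgroup_iff.1 hi y)
    have hmem := Q.asIdeal.neg_mem (h.pow_smul_sub_mem i (algebraMap (𝓞 K) (𝓞 Ω) y))
    rwa [hfix, neg_sub, ← map_pow, ← map_sub, ← residueChar_primeBelow (K := K)] at hmem
  · rintro ⟨j, rfl⟩
    rw [pow_mul]
    exact pow_mem h.pow_inertiaDeg_mem_galoisSubgroup j

lemma zpowers_eq_stabilizer (h : IsUnramifiedFrobenius Q F) :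
    Subgroup.zpowers F = MulAction.stabilizer Gal(Ω/ℚ) Q := by
  have hmem : F ∈ MulAction.stabilizer Gal(Ω/ℚ) Q.asIdeal := h.isArithFrobAt.mem_stabilizer
  rw [← stabilizer_asIdeal]
  refine Subgroup.eq_of_le_of_card_ge (Subgroup.zpowers_le.2 hmem) ?_
  have hdvd : Q.asIdeal.inertiaDeg ℤ ∣ orderOf F := by
    refine inertiaDeg_dvd_of_forall_pow_sub_self_mem Q fun y => ?_
    have hsub := Q.asIdeal.neg_mem (h.pow_smul_sub_mem (orderOf F) y)
    rwa [pow_orderOf_eq_one, one_smul, neg_sub] at hsub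
  have := liesOver_span_residueChar Q
  have := isMaximal_span_natCast (residueChar_prime Q)
  rw [Ideal.card_stabilizer_eq_card_inertia_mul_finrank (Ideal.span {(residueChar Q : ℤ)}),
    h.inertia_eq_bot, Subgroup.card_bot, one_mul, Nat.card_zpowers]
  exact Nat.le_of_dvd (orderOf_pos F) hdvd

end IsUnramifiedFrobenius

end Frobenius

section CosetPrime

open NumberField IsDedekindDomain
open scoped Pointwise

lemma card_eq_minimalPeriod {G X : Type*} [Group G] [MulAction G X] [Finite X] {g : G} {x : X}
    {s : Finset X} (hs : ∀ y, y ∈ s ↔ ∃ h ∈ Subgroup.zpowers g, h • x = y) :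
    s.card = Function.minimalPeriod (g • ·) x := by
  have hset : (s : Set X) = MulAction.orbit (Subgroup.zpowers g) x := by
    ext y
    rw [Finset.mem_coe, hs]
    exact ⟨fun ⟨h, hh, hy⟩ => ⟨⟨h, hh⟩, hy⟩, fun ⟨⟨h, hh⟩, hy⟩ => ⟨h, hh, hy⟩⟩
  have := Fintype.ofFinite (MulAction.orbit (Subgroup.zpowers g) x)
  rw [MulAction.minimalPeriod_eq_card, ← Nat.card_eq_fintype_card, ← hset,
    Nat.card_eq_card_toFinset, Finset.toFinset_coe]

variable {K Ω : Type*} [Field K] [NumberField K] [Field Ω] [NumberField Ω] [Algebra K Ω]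
  [IsGalois ℚ Ω]

variable (K) in
/-- For a prime `Q` of a Galois number field `Ω`, the prime of `K` below `x⁻¹ • Q` as a function of
the coset of `x` modulo `Gal(Ω/K)`. -/
noncomputable def cosetPrime (Q : HeightOneSpectrum (𝓞 Ω)) :
    Gal(Ω/ℚ) ⧸ galoisSubgroup K Ω → HeightOneSpectrum (𝓞 K) :=
  Quotient.lift (fun x => primeBelow K (x⁻¹ • Q)) fun x y hxy => by
    have : IsGalois K Ω := IsGalois.tower_top_of_isGalois ℚ K Ω
    have hmem := inv_mem (QuotientGroup.leftRel_apply.1 hxy)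
    have hsmul : y⁻¹ • Q = (x⁻¹ * y)⁻¹ • x⁻¹ • Q := by
      rw [← mul_smul, mul_inv_rev, inv_inv, mul_assoc, mul_inv_cancel, mul_one]
    change primeBelow K (x⁻¹ • Q) = primeBelow K (y⁻¹ • Q)
    rw [hsmul, primeBelow_smul_of_mem_galoisSubgroup hmem]

variable {Q : HeightOneSpectrum (𝓞 Ω)}

@[simp]
lemma cosetPrime_mk (x : Gal(Ω/ℚ)) : cosetPrime K Q x = primeBelow K (x⁻¹ • Q) := rfl

lemma residueChar_cosetPrime (q : Gal(Ω/ℚ) ⧸ galoisSubgroup K Ω) :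
    residueChar (cosetPrime K Q q) = residueChar Q := by
  obtain ⟨x, rfl⟩ := QuotientGroup.mk_surjective q
  rw [cosetPrime_mk, residueChar_primeBelow, residueChar_smul]

lemma exists_cosetPrime_eq {v : HeightOneSpectrum (𝓞 K)} (hv : residueChar v = residueChar Q) :
    ∃ q, cosetPrime K Q q = v := by
  obtain ⟨w, rfl⟩ := primeBelow_surjective Ω v
  obtain ⟨σ, hσ⟩ := exists_smul_eq_of_residueChar_eq
    (hv.symm.trans (residueChar_primeBelow (K := K) w))
  exact ⟨(σ⁻¹ : Gal(Ω/ℚ)), by rw [cosetPrime_mk, inv_inv, hσ]⟩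

lemma cosetPrime_smul {g : Gal(Ω/ℚ)} (hg : g • Q = Q) (q : Gal(Ω/ℚ) ⧸ galoisSubgroup K Ω) :
    cosetPrime K Q (g • q) = cosetPrime K Q q := by
  obtain ⟨x, rfl⟩ := QuotientGroup.mk_surjective q
  rw [MulAction.Quotient.smul_coe, smul_eq_mul, cosetPrime_mk, cosetPrime_mk, mul_inv_rev,
    mul_smul, inv_smul_eq_iff.2 hg.symm]

lemma exists_smul_eq_of_cosetPrime_eq {q q' : Gal(Ω/ℚ) ⧸ galoisSubgroup K Ω}
    (h : cosetPrime K Q q = cosetPrime K Q q') : ∃ g ∈ MulAction.stabilizer Gal(Ω/ℚ) Q,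
      g • q = q' := by
  have : IsGalois K Ω := IsGalois.tower_top_of_isGalois ℚ K Ω
  obtain ⟨x, rfl⟩ := QuotientGroup.mk_surjective q
  obtain ⟨y, rfl⟩ := QuotientGroup.mk_surjective q'
  obtain ⟨σ, hσ⟩ := exists_smul_eq_of_primeBelow_eq h
  replace hσ : σ.restrictScalars ℚ • x⁻¹ • Q = y⁻¹ • Q := hσ
  refine ⟨y * σ.restrictScalars ℚ * x⁻¹, ?_, ?_⟩
  · rw [MulAction.mem_stabilizer_iff, mul_smul, mul_smul, hσ, smul_inv_smul]
  · rw [MulAction.Quotient.smul_coe, smul_eq_mul, inv_mul_cancel_right, QuotientGroup.eq,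
      mul_inv_rev, inv_mul_cancel_right]
    exact inv_mem ⟨σ, rfl⟩

variable {F : Gal(Ω/ℚ)}

lemma pow_smul_eq_iff (h : IsUnramifiedFrobenius Q F) (q : Gal(Ω/ℚ) ⧸ galoisSubgroup K Ω) (i : ℕ) :
    F ^ i • q = q ↔ (cosetPrime K Q q).asIdeal.inertiaDeg ℤ ∣ i := by
  obtain ⟨x, rfl⟩ := QuotientGroup.mk_surjective q
  have hiff := (h.smul x⁻¹).pow_mem_galoisSubgroup_iff (K := K) (i := i)
  rw [cosetPrime_mk, ← hiff, conj_pow, inv_inv, MulAction.Quotient.smul_coe, smul_eq_mul,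
    eq_comm, QuotientGroup.eq, mul_assoc]

/-- The cosets in question form one orbit of `F`. -/
lemma card_filter_cosetPrime_eq (h : IsUnramifiedFrobenius Q F)
    [Fintype (Gal(Ω/ℚ) ⧸ galoisSubgroup K Ω)] [DecidableEq (HeightOneSpectrum (𝓞 K))]
    {v : HeightOneSpectrum (𝓞 K)} (hv : residueChar v = residueChar Q) :
    (Finset.univ.filter fun q => cosetPrime K Q q = v).card = v.asIdeal.inertiaDeg ℤ := by
  obtain ⟨q, rfl⟩ := exists_cosetPrime_eq hv
  have hperiod (i : ℕ) : (cosetPrime K Q q).asIdeal.inertiaDeg ℤ ∣ i ↔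
      Function.minimalPeriod (F • ·) q ∣ i := by
    rw [← pow_smul_eq_iff h, ← Function.isPeriodicPt_iff_minimalPeriod_dvd, Function.IsPeriodicPt,
      Function.IsFixedPt, smul_iterate]
  rw [Nat.dvd_right_iff_eq.1 hperiod]
  refine card_eq_minimalPeriod fun q' => ?_
  rw [h.zpowers_eq_stabilizer, Finset.mem_filter_univ]
  constructor
  · exact fun hq' => exists_smul_eq_of_cosetPrime_eq hq'.symm
  · rintro ⟨g, hg, rfl⟩
    exact cosetPrime_smul hg q

lemma sum_comp_cosetPrime (h : IsUnramifiedFrobenius Q F)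
    [Fintype (Gal(Ω/ℚ) ⧸ galoisSubgroup K Ω)] (φ : HeightOneSpectrum (𝓞 K) → ℂ) :
    ∑ q, φ (cosetPrime K Q q) =
      ∑ v ∈ (finite_residueChar_eq K (residueChar_prime Q)).toFinset,
        v.asIdeal.inertiaDeg ℤ * φ v := by
  classical
  have hmaps : ∀ q ∈ Finset.univ, cosetPrime K Q q ∈
      (finite_residueChar_eq K (residueChar_prime Q)).toFinset := fun q _ =>
    (Set.Finite.mem_toFinset _).2 (residueChar_cosetPrime q)
  rw [← Finset.sum_fiberwise_of_maps_to hmaps]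
  refine Finset.sum_congr rfl fun v hv => ?_
  rw [Finset.sum_congr rfl fun q hq => congrArg φ (Finset.mem_filter.1 hq).2, Finset.sum_const,
    card_filter_cosetPrime_eq h (by simpa using hv), nsmul_eq_mul]

end CosetPrime

section LocalIdentities

open NumberField IsDedekindDomain

variable {K : Type*} [Field K] [NumberField K]

lemma absNorm_pow_eq_prime_pow_iff (v : HeightOneSpectrum (𝓞 K)) {p m k : ℕ} (hp : p.Prime)
    (hm : m ≠ 0) :
    Ideal.absNorm v.asIdeal ^ m = p ^ k ↔ residueChar v = p ∧ v.asIdeal.inertiaDeg ℤ * m = k := by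
  rw [← residueChar_pow_inertiaDeg, ← pow_mul]
  refine ⟨fun h => ?_, fun ⟨hv, hk⟩ => by rw [hv, hk]⟩
  have hexp : v.asIdeal.inertiaDeg ℤ * m ≠ 0 := mul_ne_zero (Ideal.inertiaDeg_pos _ _).ne' hm
  have hv : residueChar v = p := (Nat.prime_dvd_prime_iff_eq (residueChar_prime v) hp).1
    ((residueChar_prime v).dvd_of_dvd_pow (h ▸ dvd_pow_self _ hexp))
  exact ⟨hv, Nat.pow_right_injective hp.two_le (hv ▸ h)⟩

open scoped Classical in
lemma mul_logCoeff_prime_pow (c : HeightOneSpectrum (𝓞 K) → ℂ) {p k : ℕ} (hp : p.Prime)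
    (hk : k ≠ 0) :
    k * logCoeff (fun v : HeightOneSpectrum (𝓞 K) => Ideal.absNorm v.asIdeal) c (p ^ k) =
      ∑ v ∈ (finite_residueChar_eq K hp).toFinset, v.asIdeal.inertiaDeg ℤ *
        if v.asIdeal.inertiaDeg ℤ ∣ k then c v ^ (k / v.asIdeal.inertiaDeg ℤ) else 0 := by
  let f (v : HeightOneSpectrum (𝓞 K)) : ℕ := v.asIdeal.inertiaDeg ℤ
  let S := {v ∈ (finite_residueChar_eq K hp).toFinset | f v ∣ k}
  have hf (v) : 0 < f v := Ideal.inertiaDeg_pos _ _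
  have hsucc {v} (hv : v ∈ S) : k / f v - 1 + 1 = k / f v :=
    Nat.sub_add_cancel (Nat.div_pos
      (Nat.le_of_dvd hk.bot_lt (Finset.mem_filter.1 hv).2) (hf v))
  have hpreimage : (fun x : HeightOneSpectrum (𝓞 K) × ℕ =>
      Ideal.absNorm x.1.asIdeal ^ (x.2 + 1)) ⁻¹' {p ^ k} =
        (S.image fun v => (v, k / f v - 1) : Finset _) := by
    ext ⟨v, m⟩
    simp only [Set.mem_preimage, Set.mem_singleton_iff, Finset.coe_image, Set.mem_image,
      Finset.mem_coe, Prod.mk.injEq, absNorm_pow_eq_prime_pow_iff v hp (Nat.add_one_ne_zero _)]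
    constructor
    · rintro ⟨hv, rfl⟩
      refine ⟨v, by simp [S, f, hv], rfl, ?_⟩
      rw [Nat.mul_div_cancel_left _ (hf v), Nat.add_sub_cancel]
    · rintro ⟨w, hw, rfl, rfl⟩
      have hmem := Finset.mem_filter.1 hw
      exact ⟨by simpa using hmem.1, by rw [hsucc hw, Nat.mul_div_cancel' hmem.2]⟩
  rw [logCoeff, hpreimage, Finset.tsum_subtype' _ fun x : HeightOneSpectrum (𝓞 K) × ℕ =>
      c x.1 ^ (x.2 + 1) / ((x.2 : ℂ) + 1),
    Finset.sum_image fun v _ w _ h => congrArg Prod.fst h, Finset.mul_sum, Finset.sum_filter]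
  refine Finset.sum_congr rfl fun v hv => ?_
  simp only [mul_ite, mul_zero]
  refine if_ctx_congr Iff.rfl (fun hdvd => ?_) fun _ => rfl
  have hvS : v ∈ S := Finset.mem_filter.2 ⟨hv, hdvd⟩
  have hfk : (f v : ℂ) * ((k / f v - 1 : ℕ) + 1) = k := by
    rw [← Nat.cast_succ, Nat.succ_eq_add_one, hsucc hvS, ← Nat.cast_mul, Nat.mul_div_cancel' hdvd]
  have hne : ((k / f v - 1 : ℕ) : ℂ) + 1 ≠ 0 := Nat.cast_add_one_ne_zero _
  rw [hsucc hvS, ← hfk]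
  field_simp
  rfl

variable {Ω : Type*} [Field Ω] [NumberField Ω] [Algebra K Ω] [IsGalois ℚ Ω]
  {Q : HeightOneSpectrum (𝓞 Ω)} {F : Gal(Ω/ℚ)}
  [Fintype (Gal(Ω/ℚ) ⧸ galoisSubgroup K Ω)]

theorem mul_logCoeff_eq_inducedCharacter (h : IsUnramifiedFrobenius Q F)
    {χ : galoisSubgroup K Ω →* ℂˣ} {c : HeightOneSpectrum (𝓞 K) → ℂ}
    (hc : ∀ q, c (cosetPrime K Q q) =
      inducedDiag χ (F ^ (cosetPrime K Q q).asIdeal.inertiaDeg ℤ) q) {k : ℕ} (hk : k ≠ 0) :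
    k * logCoeff (fun v : HeightOneSpectrum (𝓞 K) => Ideal.absNorm v.asIdeal) c
      (residueChar Q ^ k) = inducedCharacter χ (F ^ k) := by
  classical
  rw [mul_logCoeff_prime_pow c (residueChar_prime Q) hk, ← sum_comp_cosetPrime h,
    inducedCharacter]
  refine Finset.sum_congr rfl fun q _ => ?_
  split_ifs with hdvd
  · have hfix := (pow_smul_eq_iff h q _).2 dvd_rfl
    rw [hc, ← inducedDiag_pow χ hfix, ← pow_mul, Nat.mul_div_cancel' hdvd]
  · rw [← pow_smul_eq_iff h, ← inducedDiag_ne_zero_iff (χ := χ), not_not] at hdvd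
    exact hdvd.symm

open scoped Classical in
lemma normCount_residueChar (h : IsUnramifiedFrobenius Q F) :
    normCount K (residueChar Q) =
      (Finset.univ.filter fun q : Gal(Ω/ℚ) ⧸ galoisSubgroup K Ω => F • q = q).card := by
  have hsum := sum_comp_cosetPrime h fun v : HeightOneSpectrum (𝓞 K) =>
    if v.asIdeal.inertiaDeg ℤ = 1 then 1 else 0
  have hiff (q : Gal(Ω/ℚ) ⧸ galoisSubgroup K Ω) :
      (cosetPrime K Q q).asIdeal.inertiaDeg ℤ = 1 ↔ F • q = q := by
    rw [← Nat.dvd_one, ← pow_smul_eq_iff h, pow_one]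
  simp only [hiff, Finset.sum_boole] at hsum
  have hset : {v : HeightOneSpectrum (𝓞 K) | Ideal.absNorm v.asIdeal = residueChar Q} =
      {v ∈ (finite_residueChar_eq K (residueChar_prime Q)).toFinset |
        v.asIdeal.inertiaDeg ℤ = 1} := by
    ext v
    simp [absNorm_eq_prime_iff (residueChar_prime Q)]
  rw [normCount, hset, Set.ncard_coe_finset, ← Nat.cast_inj (R := ℂ), hsum, Finset.card_filter,
    Nat.cast_sum]
  refine Finset.sum_congr rfl fun v _ => ?_
  split_ifs with hv <;> simp [hv]

end LocalIdentities

section ArtinCoefficient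

open NumberField IsDedekindDomain
open scoped Pointwise

lemma galRestrict_eq_smul {K N : Type*} [Field K] [NumberField K] [Field N] [Algebra K N]
    [FiniteDimensional K N] (σ : Gal(N/K)) (y : 𝓞 N) :
    galRestrict (𝓞 K) K N (𝓞 N) σ y = σ • y :=
  RingOfIntegers.ext (algebraMap_galRestrict_apply (𝓞 K) (K := K) (L := N) (B := 𝓞 N) σ y)

section Restriction

variable {K N Ω : Type*} [Field K] [Field N] [Algebra K N] [Field Ω] [Algebra K Ω] [Algebra N Ω]
  [IsScalarTower K N Ω]

lemma algebraMap_restrictNormalHom_smul [Normal K N] (σ : Gal(Ω/K)) (y : 𝓞 N) :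
    algebraMap (𝓞 N) (𝓞 Ω) (AlgEquiv.restrictNormalHom N σ • y) =
      σ • algebraMap (𝓞 N) (𝓞 Ω) y :=
  RingOfIntegers.ext (AlgEquiv.restrictNormal_commutes σ N y)

variable (K N) in
lemma primeBelow_primeBelow (w : HeightOneSpectrum (𝓞 Ω)) :
    primeBelow K (primeBelow N w) = primeBelow K w :=
  HeightOneSpectrum.ext (Ideal.under_under _)

variable [NumberField K] [NumberField Ω] [Normal K N]

variable (Ω) in
/-- The inflation of a character of `Gal(N/K)` to `Gal(Ω/K)`, seen as a subgroup of `Gal(Ω/ℚ)`. -/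
noncomputable def inflation (χ : Gal(N/K) →* ℂˣ) : galoisSubgroup K Ω →* ℂˣ :=
  (χ.comp (AlgEquiv.restrictNormalHom N)).comp
    (MonoidHom.ofInjective
      (AlgEquiv.restrictScalarsHom_injective (S := K) (A := Ω) ℚ)).symm.toMonoidHom

lemma extendByZero_inflation (χ : Gal(N/K) →* ℂˣ) (σ : Gal(Ω/K)) :
    extendByZero (inflation Ω χ) (σ.restrictScalars ℚ) =
      χ (AlgEquiv.restrictNormalHom N σ) := by
  have hmem : σ.restrictScalars ℚ ∈ galoisSubgroup K Ω := ⟨σ, rfl⟩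
  have hsymm := (MonoidHom.ofInjective
    (AlgEquiv.restrictScalarsHom_injective (S := K) (A := Ω) ℚ)).symm_apply_apply σ
  rw [extendByZero_of_mem _ hmem]
  exact congrArg (fun τ => (χ (AlgEquiv.restrictNormalHom N τ) : ℂ)) hsymm

end Restriction

variable {K N : Type} [Field K] [NumberField K] [Field N] [NumberField N] [Algebra K N]
  [IsGalois K N]

open scoped Classical in
/-- The coefficient `χ(Frob_v)` of the Euler factor of `L_K(χ, s)` at `v`. It is `0` when `χ` is
nontrivial on the inertia groups above `v`. -/
noncomputable def artinCoeff (χ : Gal(N/K) →* ℂˣ) (v : HeightOneSpectrum (𝓞 K)) : ℂ :=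
  if h : ∃ σ : Gal(N/K), ∃ w : HeightOneSpectrum (𝓞 N), primeBelow K w = v ∧
      IsArithFrobAt (𝓞 K) σ w.asIdeal ∧ ∀ τ ∈ w.asIdeal.inertia Gal(N/K), χ τ = 1
  then χ h.choose else 0

lemma norm_artinCoeff_le_one (χ : Gal(N/K) →* ℂˣ) (v : HeightOneSpectrum (𝓞 K)) :
    ‖artinCoeff χ v‖ ≤ 1 := by
  rw [artinCoeff]
  split_ifs with h
  · refine (Complex.norm_eq_one_of_pow_eq_one ?_ (orderOf_pos h.choose).ne').le
    rw [← Units.val_pow_eq_pow_val, ← map_pow, pow_orderOf_eq_one, map_one, Units.val_one]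
  · simp

lemma isEulerData_artinCoeff (χ : Gal(N/K) →* ℂˣ) :
    IsEulerData (fun v : HeightOneSpectrum (𝓞 K) => Ideal.absNorm v.asIdeal) (artinCoeff χ) where
  two_le := two_le_absNorm
  norm_coeff_le_one := norm_artinCoeff_le_one χ
  summable _ := summable_absNorm_rpow_neg K

section Frobenius

variable {χ : Gal(N/K) →* ℂˣ} {σ : Gal(N/K)} {w : HeightOneSpectrum (𝓞 N)}

lemma apply_eq_apply_of_isArithFrobAt {σ' : Gal(N/K)} {w' : HeightOneSpectrum (𝓞 N)}
    (hw : primeBelow K w' = primeBelow K w) (hσ : IsArithFrobAt (𝓞 K) σ w.asIdeal)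
    (hσ' : IsArithFrobAt (𝓞 K) σ' w'.asIdeal)
    (hχ : ∀ τ ∈ w.asIdeal.inertia Gal(N/K), χ τ = 1) : χ σ' = χ σ := by
  obtain ⟨ρ, rfl⟩ := exists_smul_eq_of_primeBelow_eq hw
  have hmem := hχ _ ((hσ'.conj ρ).mul_inv_mem_inertia hσ)
  rwa [map_mul, map_inv, mul_inv_eq_one, map_mul, map_mul, map_inv, mul_inv_cancel_comm] at hmem

lemma artinCoeff_primeBelow (hσ : IsArithFrobAt (𝓞 K) σ w.asIdeal)
    (hχ : ∀ τ ∈ w.asIdeal.inertia Gal(N/K), χ τ = 1) :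
    artinCoeff χ (primeBelow K w) = χ σ := by
  have hex : ∃ σ : Gal(N/K), ∃ w' : HeightOneSpectrum (𝓞 N), primeBelow K w' = primeBelow K w ∧
      IsArithFrobAt (𝓞 K) σ w'.asIdeal ∧ ∀ τ ∈ w'.asIdeal.inertia Gal(N/K), χ τ = 1 :=
    ⟨σ, w, rfl, hσ, hχ⟩
  obtain ⟨w', hw', hσ', -⟩ := hex.choose_spec
  rw [artinCoeff, dif_pos hex, apply_eq_apply_of_isArithFrobAt hw' hσ hσ' hχ]

lemma isArithFrobAt_iff_galRestrict : IsArithFrobAt (𝓞 K) σ w.asIdeal ↔ ∀ y : 𝓞 N,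
    galRestrict (𝓞 K) K N (𝓞 N) σ y - y ^ Ideal.absNorm (primeBelow K w).asIdeal ∈ w.asIdeal := by
  simp only [galRestrict_eq_smul]
  rfl

lemma mem_inertia_iff_galRestrict : σ ∈ w.asIdeal.inertia Gal(N/K) ↔
    ∀ y : 𝓞 N, galRestrict (𝓞 K) K N (𝓞 N) σ y - y ∈ w.asIdeal := by
  simp only [galRestrict_eq_smul]
  rfl

lemma localArtinFactor_eq (χ : Gal(N/K) →* ℂˣ) (v : HeightOneSpectrum (𝓞 K)) (s : ℂ) :
    localArtinFactor K N χ v.asIdeal s =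
      (1 - artinCoeff χ v * (Ideal.absNorm v.asIdeal : ℂ) ^ (-s))⁻¹ := by
  rw [localArtinFactor]
  split_ifs with h
  · obtain ⟨Q, hQ, hQ_ne, hQv, hfrob, hinert⟩ := h.choose_spec
    let w : HeightOneSpectrum (𝓞 N) := ⟨Q, hQ, hQ_ne⟩
    obtain rfl : primeBelow K w = v := HeightOneSpectrum.ext hQv
    rw [← artinCoeff_primeBelow (w := w) (isArithFrobAt_iff_galRestrict.2 hfrob)
      fun τ hτ => hinert τ (mem_inertia_iff_galRestrict.1 hτ)]
  · rw [artinCoeff, dif_neg, zero_mul, sub_zero, inv_one]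
    rintro ⟨σ, w, rfl, hfrob, hinert⟩
    exact h ⟨σ, w.asIdeal, w.isPrime, w.ne_bot, rfl, isArithFrobAt_iff_galRestrict.1 hfrob,
      fun τ hτ => hinert τ (mem_inertia_iff_galRestrict.2 hτ)⟩

lemma artinLFunction_eq_tprod (χ : Gal(N/K) →* ℂˣ) (s : ℂ) :
    artinLFunction K N χ s = ∏' v : HeightOneSpectrum (𝓞 K),
      (1 - artinCoeff χ v * (Ideal.absNorm v.asIdeal : ℂ) ^ (-s))⁻¹ := by
  let e : HeightOneSpectrum (𝓞 K) ≃ {p : Ideal (𝓞 K) // p.IsPrime ∧ p ≠ ⊥} :=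
    ⟨fun v => ⟨v.asIdeal, v.isPrime, v.ne_bot⟩, fun p => ⟨p.1, p.2.1, p.2.2⟩, fun _ => rfl,
      fun _ => rfl⟩
  simp only [← localArtinFactor_eq]
  exact (e.tprod_eq fun p => localArtinFactor K N χ p.1 s).symm

end Frobenius

section Inflation

variable {Ω : Type*} [Field Ω] [NumberField Ω] [Algebra K Ω] [Algebra N Ω] [IsScalarTower K N Ω]
  [IsGalois ℚ Ω] {Q : HeightOneSpectrum (𝓞 Ω)} {F : Gal(Ω/ℚ)}

lemma artinCoeff_primeBelow_eq_extendByZero (h : IsUnramifiedFrobenius Q F)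
    (hN : (primeBelow N Q).asIdeal.inertia Gal(N/K) = ⊥) (χ : Gal(N/K) →* ℂˣ) :
    artinCoeff χ (primeBelow K Q) =
      extendByZero (inflation Ω χ) (F ^ (primeBelow K Q).asIdeal.inertiaDeg ℤ) := by
  have : IsGalois K Ω := IsGalois.tower_top_of_isGalois ℚ K Ω
  obtain ⟨σ, hσ⟩ := IsArithFrobAt.exists_of_isInvariant (𝓞 K) Gal(Ω/K) Q.asIdeal
  have hrestrict : IsArithFrobAt (𝓞 K) (AlgEquiv.restrictNormalHom N σ)
      (primeBelow N Q).asIdeal := fun y => by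
    have hy := hσ (algebraMap (𝓞 N) (𝓞 Ω) y)
    have hunder : Q.asIdeal.under (𝓞 K) = (primeBelow N Q).asIdeal.under (𝓞 K) :=
      congrArg HeightOneSpectrum.asIdeal (primeBelow_primeBelow K N Q).symm
    rw [hunder] at hy
    rw [primeBelow, Ideal.mem_comap, map_sub, map_pow]
    simp only [MulSemiringAction.toAlgHom_apply, algebraMap_restrictNormalHom_smul]
    exact hy
  rw [← h.restrictScalars_eq_pow K hσ, extendByZero_inflation, ← primeBelow_primeBelow K N]
  refine artinCoeff_primeBelow hrestrict fun τ hτ => ?_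
  rw [hN, Subgroup.mem_bot] at hτ
  rw [hτ, map_one]

theorem artinCoeff_cosetPrime (h : IsUnramifiedFrobenius Q F)
    (hN : ∀ w : HeightOneSpectrum (𝓞 N), residueChar w = residueChar Q →
      w.asIdeal.inertia Gal(N/K) = ⊥)
    (χ : Gal(N/K) →* ℂˣ) (q : Gal(Ω/ℚ) ⧸ galoisSubgroup K Ω) :
    artinCoeff χ (cosetPrime K Q q) = inducedDiag (inflation Ω χ)
      (F ^ (cosetPrime K Q q).asIdeal.inertiaDeg ℤ) q := by
  obtain ⟨x, rfl⟩ := QuotientGroup.mk_surjective q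
  have hx := h.smul x⁻¹
  rw [inv_inv] at hx
  have hconj (i : ℕ) : x⁻¹ * F ^ i * x = (x⁻¹ * F * x) ^ i := by
    simpa using (conj_pow (i := i) (a := x⁻¹) (b := F)).symm
  rw [cosetPrime_mk, inducedDiag_mk, hconj]
  exact artinCoeff_primeBelow_eq_extendByZero hx
    (hN _ (by rw [residueChar_primeBelow, residueChar_smul])) χ

end Inflation

end ArtinCoefficient

section Equidistribution

open Filter Topology Asymptotics

lemma sum_indicator_one_comp {α β : Type*} [Fintype α] (t : Set β) (f : α → β) :
    ∑ a, t.indicator (fun _ => (1 : ℝ)) (f a) = Nat.card {a | f a ∈ t} := by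
  classical
  simp only [Set.indicator_apply, Finset.sum_boole, ← Fintype.card_subtype,
    ← Nat.card_eq_fintype_card]
  rfl

/-- Möbius inversion over the subgroup lattice. -/
lemma indicator_zpowers_eq_mem {G : Type*} [Group G] [Finite G] {M : Type*}
    [AddCommGroup M] (m : M) {V : AddSubgroup (G → M)}
    (hV : ∀ D : Subgroup G, (D : Set G).indicator (fun _ => m) ∈ V) (D : Subgroup G) :
    {g | Subgroup.zpowers g = D}.indicator (fun _ => m) ∈ V := by
  classical
  have := Fintype.ofFinite (Subgroup G)
  induction D using WellFoundedLT.induction with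
  | ind D ih =>
    have hdecomp : {g | Subgroup.zpowers g = D}.indicator (fun _ => m) =
        (D : Set G).indicator (fun _ => m) -
          ∑ D' with D' < D, {g | Subgroup.zpowers g = D'}.indicator (fun _ => m) := by
      ext g
      simp only [Pi.sub_apply, Finset.sum_apply, Set.indicator_apply, Set.mem_ofPred_eq,
        SetLike.mem_coe, Finset.sum_ite_eq, Finset.mem_filter, Finset.mem_univ, true_and,
        ← Subgroup.zpowers_le]
      rcases eq_or_ne (Subgroup.zpowers g) D with h | h
      · simp [h]
      · simp [h, lt_iff_le_and_ne]
    rw [hdecomp]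
    exact V.sub_mem (hV D) (V.sum_mem fun D' hD' => ih D' (Finset.mem_filter.1 hD').2)

section Group

variable {G : Type*} [Group G] [Fintype G]

lemma summable_sum_conj_mul_rpow_neg {S : Set ℕ} (σ : S → G) (f : G → ℝ) {s : ℝ} (hs : 1 < s) :
    Summable fun p : S => (∑ x, f (x⁻¹ * σ p * x)) * (p : ℝ) ^ (-s) := by
  have hsum : Summable fun p : S => (p : ℝ) ^ (-s) :=
    (Real.summable_nat_rpow.2 (neg_lt_neg hs)).subtype S
  refine .of_norm_bounded (hsum.mul_left (∑ x : G, ∑ g, |f g|)) fun p => ?_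
  rw [norm_mul, Real.norm_of_nonneg (by positivity : (0 : ℝ) ≤ (p : ℝ) ^ (-s))]
  refine mul_le_mul_of_nonneg_right ?_ (by positivity)
  exact norm_sum_le_of_le _ fun x _ =>
    Finset.single_le_sum (f := fun g => |f g|) (fun _ _ => abs_nonneg _) (Finset.mem_univ _)

/-- The functions on `G` whose average over the conjugates of `σ p`, `p ∈ S`, has Dirichlet mean
value equal to their average over `G`, with an error that is `O(1)` instead of
`o(log (1 / (s - 1)))`. Both averages are multiplied by the order of `G`. -/
noncomputable def equidistributedFunctions {S : Set ℕ} (σ : S → G) : AddSubgroup (G → ℝ) where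
  carrier := {f | (fun s : ℝ => ∑' p : S, (∑ x, f (x⁻¹ * σ p * x)) * (p : ℝ) ^ (-s) +
    (∑ g, f g) * Real.log (s - 1)) =O[𝓝[>] 1] (1 : ℝ → ℝ)}
  zero_mem' := by simpa using isBigO_zero _ _
  add_mem' {f f'} hf hf' := by
    refine (hf.add hf').congr' ?_ .rfl
    filter_upwards [self_mem_nhdsWithin] with s hs
    simp only [Pi.add_apply, Finset.sum_add_distrib, add_mul]
    rw [(summable_sum_conj_mul_rpow_neg σ f hs).tsum_add
      (summable_sum_conj_mul_rpow_neg σ f' hs), add_add_add_comm]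
  neg_mem' {f} hf := by
    refine (IsBigO.neg_left hf).congr_left fun s => ?_
    simp only [Pi.neg_apply, Finset.sum_neg_distrib, neg_mul, tsum_neg, neg_add]

lemma mem_equidistributedFunctions_iff {S : Set ℕ} {σ : S → G} {f : G → ℝ} :
    f ∈ equidistributedFunctions σ ↔
      (fun s : ℝ => ∑' p : S, (∑ x, f (x⁻¹ * σ p * x)) * (p : ℝ) ^ (-s) +
        (∑ g, f g) * Real.log (s - 1)) =O[𝓝[>] 1] (1 : ℝ → ℝ) := Iff.rfl

lemma exists_zpowers_conj_eq {S : Set ℕ} {σ : S → G}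
    (hσ : ∀ D : Subgroup G, (D : Set G).indicator (fun _ => 1) ∈ equidistributedFunctions σ)
    (g : G) : ∃ p x, Subgroup.zpowers (x⁻¹ * σ p * x) = Subgroup.zpowers g := by
  by_contra! hne
  set f : G → ℝ := {h | Subgroup.zpowers h = Subgroup.zpowers g}.indicator fun _ => 1 with hf_def
  have hf (p : S) (x : G) : f (x⁻¹ * σ p * x) = 0 :=
    Set.indicator_of_notMem (s := {h | Subgroup.zpowers h = Subgroup.zpowers g}) (hne p x) _
  have hbounded := mem_equidistributedFunctions_iff.1
    (indicator_zpowers_eq_mem 1 hσ (Subgroup.zpowers g))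
  simp only [← hf_def, hf, Finset.sum_const_zero, zero_mul, tsum_zero, zero_add] at hbounded
  have hpos : 0 < ∑ h, f h := by
    refine Finset.sum_pos' (fun h _ => Set.indicator_nonneg (fun _ _ => zero_le_one) h)
      ⟨g, Finset.mem_univ g, ?_⟩
    simp [hf_def]
  have hshift : Tendsto (fun s : ℝ => s - 1) (𝓝[>] 1) (𝓝[>] 0) := by
    refine tendsto_nhdsWithin_iff.2 ⟨?_, ?_⟩
    · exact ((continuous_sub_right (1 : ℝ)).tendsto' _ _ (sub_self 1)).mono_left
        nhdsWithin_le_nhds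
    · filter_upwards [self_mem_nhdsWithin] with s hs using sub_pos.2 hs.out
  have hlog := (Real.tendsto_log_nhdsGT_zero.comp hshift).const_mul_atBot hpos
  exact not_isBoundedUnder_of_tendsto_atTop (tendsto_abs_atBot_atTop.comp hlog)
    (isBigO_one_iff ℝ |>.1 hbounded)

end Group

section NumberField

open NumberField IsDedekindDomain

variable {Ω : Type*} [Field Ω] [NumberField Ω]

instance numberField_fixedField (D : Subgroup Gal(Ω/ℚ)) :
    NumberField (IntermediateField.fixedField D) := NumberField.of_intermediateField _

lemma galoisSubgroup_fixedField (D : Subgroup Gal(Ω/ℚ)) :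
    galoisSubgroup (IntermediateField.fixedField D) Ω = D := by
  conv_rhs => rw [← IntermediateField.fixingSubgroup_fixedField D]
  ext g
  rw [mem_galoisSubgroup_iff, IntermediateField.mem_fixingSubgroup_iff, Subtype.forall]
  rfl

variable [IsGalois ℚ Ω]

lemma sum_indicator_conj {Q : HeightOneSpectrum (𝓞 Ω)} {F : Gal(Ω/ℚ)}
    (h : IsUnramifiedFrobenius Q F) (D : Subgroup Gal(Ω/ℚ)) :
    ∑ x, (D : Set Gal(Ω/ℚ)).indicator (fun _ => (1 : ℝ)) (x⁻¹ * F * x) =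
      Nat.card D * normCount (IntermediateField.fixedField D) (residueChar Q) := by
  classical
  let K := IntermediateField.fixedField D
  have hset : {x : Gal(Ω/ℚ) | x⁻¹ * F * x ∈ D} =
      QuotientGroup.mk ⁻¹' {q : Gal(Ω/ℚ) ⧸ galoisSubgroup K Ω | F • q = q} := by
    ext x
    rw [Set.mem_preimage, Set.mem_ofPred_eq, Set.mem_ofPred_eq,
      MulAction.Quotient.smul_coe, eq_comm, QuotientGroup.eq, smul_eq_mul, mul_assoc,
      galoisSubgroup_fixedField]
  have hcard := QuotientGroup.card_preimage_mk (galoisSubgroup K Ω) {q | F • q = q}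
  rw [← hset] at hcard
  nth_rewrite 1 [galoisSubgroup_fixedField] at hcard
  rw [normCount_residueChar h, sum_indicator_one_comp, ← Nat.cast_mul, ← Fintype.card_subtype,
    ← Nat.card_eq_fintype_card]
  exact congrArg Nat.cast hcard

theorem exists_isUnramifiedFrobenius_zpowers_eq {B : Set ℕ} (hB : B.Finite) (g : Gal(Ω/ℚ)) :
    ∃ (Q : HeightOneSpectrum (𝓞 Ω)) (F : Gal(Ω/ℚ)),
      IsUnramifiedFrobenius Q F ∧ residueChar Q ∉ B ∧
        Subgroup.zpowers F = Subgroup.zpowers g := by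
  let T := residueChar '' {Q : HeightOneSpectrum (𝓞 Ω) | Q.asIdeal.inertia Gal(Ω/ℚ) ≠ ⊥}
  have : FaithfulSMul Gal(Ω/ℚ) (𝓞 Ω) := IsGaloisGroup.faithful ℤ
  have hT : T.Finite := finite_inertia_ne_bot.image _
  let S := {p : ℕ | p.Prime ∧ p ∉ B ∪ T}
  have hfrob (p : S) : ∃ (Q : HeightOneSpectrum (𝓞 Ω)) (F : Gal(Ω/ℚ)),
      residueChar Q = p ∧ IsUnramifiedFrobenius Q F := by
    obtain ⟨Q, hQ⟩ := exists_residueChar_eq Ω p.2.1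
    obtain ⟨F, hF⟩ := exists_isUnramifiedFrobenius (Q := Q) <| by
      by_contra hne
      exact p.2.2 (.inr ⟨Q, hne, hQ⟩)
    exact ⟨Q, F, hQ, hF⟩
  choose Q σ hQ hσ using hfrob
  have hS : {p : ℕ | p.Prime ∧ p ∉ S}.Finite :=
    (hB.union hT).subset fun p hp => by_contra fun hnot => hp.2 ⟨hp.1, hnot⟩
  have hmem (D : Subgroup Gal(Ω/ℚ)) :
      (D : Set Gal(Ω/ℚ)).indicator (fun _ => 1) ∈ equidistributedFunctions σ := by
    refine mem_equidistributedFunctions_iff.2 (((tsum_normCount_mul_rpow_neg_add_log_isBigO_one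
      (IntermediateField.fixedField D) hS).const_mul_left (Nat.card D : ℝ)).congr_left fun s => ?_)
    rw [mul_add, ← tsum_mul_left]
    congr 1
    · refine tsum_congr fun p => ?_
      rw [sum_indicator_conj (hσ p), hQ, mul_assoc]
    · exact congrArg (· * _) (sum_indicator_one_comp (D : Set Gal(Ω/ℚ)) id).symm
  obtain ⟨p, x, hx⟩ := exists_zpowers_conj_eq hmem g
  have hconj := (hσ p).smul x⁻¹
  rw [inv_inv] at hconj
  refine ⟨x⁻¹ • Q p, x⁻¹ * σ p * x, hconj, ?_, hx⟩
  rw [residueChar_smul, hQ]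
  exact fun hmem => p.2.2 (.inl hmem)

end NumberField

end Equidistribution

section FieldIso

variable {K K' Ω : Type*} [Field K] [NumberField K] [Field K'] [NumberField K'] [Field Ω]
  [NumberField Ω] [Algebra K Ω] [Algebra K' Ω] [IsGalois ℚ Ω]

lemma mem_fieldRange_algebraMap_iff {w : Ω} :
    w ∈ (algebraMap K Ω).fieldRange ↔ ∀ g ∈ galoisSubgroup K Ω, g w = w := by
  have : IsGalois K Ω := IsGalois.tower_top_of_isGalois ℚ K Ω
  refine (IsGalois.mem_range_algebraMap_iff_fixed w).trans ⟨?_, fun h σ => h _ ⟨σ, rfl⟩⟩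
  rintro h _ ⟨σ, rfl⟩
  exact h σ

theorem nonempty_ringEquiv_of_galoisSubgroup_conj (z : Gal(Ω/ℚ))
    (hz : ∀ g, g ∈ galoisSubgroup K Ω ↔ z⁻¹ * g * z ∈ galoisSubgroup K' Ω) :
    Nonempty (K ≃+* K') := by
  let f : K' →+* Ω := (z : Ω →+* Ω).comp (algebraMap K' Ω)
  have hrange : (algebraMap K Ω).fieldRange = f.fieldRange := by
    ext w
    have hmem : w ∈ f.fieldRange ↔ z⁻¹ w ∈ (algebraMap K' Ω).fieldRange :=
      exists_congr fun k => z.toEquiv.eq_symm_apply.symm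
    rw [hmem, mem_fieldRange_algebraMap_iff, mem_fieldRange_algebraMap_iff]
    refine .trans (forall_congr' fun g => ?_) (MulAut.conj z⁻¹).surjective.forall.symm
    rw [hz, MulAut.conj_apply, inv_inv, AlgEquiv.mul_apply, AlgEquiv.mul_apply,
      (z⁻¹).injective.eq_iff, ← AlgEquiv.mul_apply z, mul_inv_cancel, AlgEquiv.one_apply]
  exact ⟨((RingEquiv.ofBijective _ (algebraMap K Ω).rangeRestrictField_bijective).trans
    (RingEquiv.subfieldCongr hrange)).trans
    (RingEquiv.ofBijective _ f.rangeRestrictField_bijective).symm⟩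

end FieldIso

section Comparison

open NumberField IsDedekindDomain Filter

variable {K K' N N' Ω : Type} [Field K] [NumberField K] [Field K'] [NumberField K'] [Field N]
  [NumberField N] [Field N'] [NumberField N'] [Field Ω] [NumberField Ω] [Algebra K N]
  [Algebra K' N'] [Algebra K Ω] [Algebra K' Ω] [Algebra N Ω] [Algebra N' Ω] [IsScalarTower K N Ω]
  [IsScalarTower K' N' Ω] [IsGalois ℚ Ω] [IsGalois K N] [IsGalois K' N']
  {χ : Gal(N/K) →* ℂˣ} {χ' : Gal(N'/K') →* ℂˣ}

lemma exists_pow_eq_of_mem_zpowers {G : Type*} [Group G] [Finite G] {g h : G}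
    (hh : h ∈ Subgroup.zpowers g) : ∃ k ≠ 0, g ^ k = h := by
  obtain ⟨k, hk⟩ := mem_powers_iff_mem_zpowers.2 hh
  refine ⟨k + orderOf g, (Nat.add_pos_right k (orderOf_pos g)).ne', ?_⟩
  rw [pow_add, pow_orderOf_eq_one, mul_one]
  exact hk

variable (K N) in
lemma finite_residueChar_image_ramified :
    (residueChar '' {w : HeightOneSpectrum (𝓞 N) | w.asIdeal.inertia Gal(N/K) ≠ ⊥}).Finite :=
  have : FaithfulSMul Gal(N/K) (𝓞 N) := IsGaloisGroup.faithful (𝓞 K)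
  finite_inertia_ne_bot.image _

/-- The Artin formalism: `L_K(χ, s)` is the Artin `L`-function over `ℚ` of the representation
induced from the inflation of `χ`, and it determines the character of that representation. -/
theorem inducedCharacter_inflation_eq_of_artinLFunction_eq
    [Fintype (Gal(Ω/ℚ) ⧸ galoisSubgroup K Ω)] [Fintype (Gal(Ω/ℚ) ⧸ galoisSubgroup K' Ω)]
    (hL : ∀ᶠ s : ℝ in atTop, artinLFunction K N χ s = artinLFunction K' N' χ' s) :
    inducedCharacter (inflation Ω χ) = inducedCharacter (inflation Ω χ') := by
  ext g
  obtain ⟨Q, F, h, hQ, hzpowers⟩ := exists_isUnramifiedFrobenius_zpowers_eq (Ω := Ω)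
    ((finite_residueChar_image_ramified K N).union (finite_residueChar_image_ramified K' N')) g
  obtain ⟨k, hk, rfl⟩ := exists_pow_eq_of_mem_zpowers (hzpowers ▸ Subgroup.mem_zpowers g)
  simp only [artinLFunction_eq_tprod] at hL
  have hcoeff := (isEulerData_artinCoeff χ).logCoeff_eq_of_tprod_eq (isEulerData_artinCoeff χ') hL
    (pow_ne_zero k (residueChar_prime Q).ne_zero)
  have hN (w : HeightOneSpectrum (𝓞 N)) (hw : residueChar w = residueChar Q) :
      w.asIdeal.inertia Gal(N/K) = ⊥ := by
    by_contra hne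
    exact hQ (.inl ⟨w, hne, hw⟩)
  have hN' (w : HeightOneSpectrum (𝓞 N')) (hw : residueChar w = residueChar Q) :
      w.asIdeal.inertia Gal(N'/K') = ⊥ := by
    by_contra hne
    exact hQ (.inr ⟨w, hne, hw⟩)
  rw [← mul_logCoeff_eq_inducedCharacter h (artinCoeff_cosetPrime h hN χ) hk,
    ← mul_logCoeff_eq_inducedCharacter h (artinCoeff_cosetPrime h hN' χ') hk, hcoeff]

theorem nonempty_ringEquiv_of_artinLFunction_eq
    (hL : ∀ᶠ s : ℝ in atTop, artinLFunction K N χ s = artinLFunction K' N' χ' s)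
    {γ : Gal(Ω/ℚ)} {p : ℕ} [Fact p.Prime] (hp : 2 < p)
    (hone : ∀ q : Gal(Ω/ℚ) ⧸ galoisSubgroup K Ω, q ≠ (1 : Gal(Ω/ℚ)) →
      inducedDiag (inflation Ω χ) γ q = 1)
    (hne : extendByZero (inflation Ω χ) γ ≠ 1) (hpow : extendByZero (inflation Ω χ) γ ^ p = 1) :
    Nonempty (K ≃+* K') := by
  have := Fintype.ofFinite (Gal(Ω/ℚ) ⧸ galoisSubgroup K Ω)
  have := Fintype.ofFinite (Gal(Ω/ℚ) ⧸ galoisSubgroup K' Ω)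
  obtain ⟨z, hz⟩ := exists_extendByZero_eq_conj_of_inducedCharacter_eq _ _
    (inducedCharacter_inflation_eq_of_artinLFunction_eq (Ω := Ω) hL) hp hone hne hpow
  refine nonempty_ringEquiv_of_galoisSubgroup_conj z fun g => ?_
  rw [← extendByZero_ne_zero_iff (inflation Ω χ), hz, extendByZero_ne_zero_iff]

end Comparison

section SimplestCubic

open Polynomial

section CommRing

variable {R S : Type*} [CommRing R] [CommRing S]

/-- Shanks' simplest cubic polynomial. The homography `r ↦ (1 - r)⁻¹` of order three permutes its
roots cyclically, so one root over a field gives all of them. -/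
noncomputable def simplestCubic (t : R) : R[X] := X ^ 3 - C t * X ^ 2 + C (t - 3) * X + 1

lemma eval_simplestCubic (t r : R) :
    (simplestCubic t).eval r = r ^ 3 - t * r ^ 2 + (t - 3) * r + 1 := by
  simp [simplestCubic]

lemma map_simplestCubic (f : R →+* S) (t : R) :
    (simplestCubic t).map f = simplestCubic (f t) := by
  simp [simplestCubic, map_ofNat f 3]

lemma eval_map_simplestCubic (f : R →+* S) (t r : R) :
    (simplestCubic (f t)).eval (f r) = f ((simplestCubic t).eval r) := by
  rw [← map_simplestCubic, eval_map_apply]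

lemma isRoot_map_simplestCubic (f : R →+* S) {t r : R} (h : (simplestCubic t).IsRoot r) :
    (simplestCubic (f t)).IsRoot (f r) := by
  rw [IsRoot.def, eval_map_simplestCubic, h.eq_zero, map_zero]

lemma eval_derivative_simplestCubic (t r : R) :
    (simplestCubic t).derivative.eval r = 3 * r ^ 2 - 2 * t * r + (t - 3) := by
  simp only [simplestCubic, derivative_add, derivative_sub, derivative_X_pow,
    derivative_C_mul, derivative_X, derivative_one, eval_add, eval_sub, eval_mul, eval_C, eval_pow,
    eval_X, eval_one, eval_zero]
  push_cast
  ring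

lemma natDegree_simplestCubic [Nontrivial R] (t : R) : (simplestCubic t).natDegree = 3 := by
  unfold simplestCubic
  compute_degree!

lemma monic_simplestCubic [Nontrivial R] (t : R) : (simplestCubic t).Monic := by
  unfold simplestCubic
  monicity!

end CommRing

section Field

variable {F : Type*} [Field F] {t r : F}

lemma ne_zero_of_isRoot_simplestCubic (h : (simplestCubic t).IsRoot r) : r ≠ 0 := by
  rintro rfl
  simp [eval_simplestCubic] at h

lemma one_sub_ne_zero_of_isRoot_simplestCubic (h : (simplestCubic t).IsRoot r) : 1 - r ≠ 0 := by
  intro hr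
  obtain rfl := sub_eq_zero.1 hr
  rw [IsRoot.def, eval_simplestCubic] at h
  exact one_ne_zero (neg_eq_zero.1 (by linear_combination h : (-1 : F) = 0))

lemma simplestCubic_eq_prod (h : (simplestCubic t).IsRoot r) :
    simplestCubic t = (X - C r) * (X - C (1 - r)⁻¹) * (X - C (1 - r⁻¹)) := by
  have h0 := ne_zero_of_isRoot_simplestCubic h
  have h1 := one_sub_ne_zero_of_isRoot_simplestCubic h
  rw [IsRoot.def, eval_simplestCubic] at h
  have ht : t = r + (1 - r)⁻¹ + (1 - r⁻¹) := by
    field_simp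
    linear_combination h
  have ht3 : t - 3 = r * (1 - r)⁻¹ + r * (1 - r⁻¹) + (1 - r)⁻¹ * (1 - r⁻¹) := by
    rw [ht]
    field_simp
    ring
  have hone : (1 : F[X]) = -C (r * (1 - r)⁻¹ * (1 - r⁻¹)) := by
    rw [← C_neg, ← C_1]
    congr 1
    field_simp
    ring
  rw [simplestCubic, ht3, hone]
  nth_rewrite 1 [ht]
  simp only [C_add, C_mul]
  ring

lemma irreducible_simplestCubic (h : ∀ r, ¬ (simplestCubic t).IsRoot r) :
    Irreducible (simplestCubic t) := by
  refine (irreducible_iff_roots_eq_zero_of_degree_le_three ?_ ?_).2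
    (Multiset.eq_zero_of_forall_notMem fun r hr => h r (isRoot_of_mem_roots hr)) <;>
  simp [natDegree_simplestCubic]

variable (F) in
/-- A root of `simplestCubic c` determines `c`, so if all the parameters had a root then, by
counting, every element of `F` would be a root for some parameter; but `0` is not. -/
lemma exists_forall_not_isRoot_simplestCubic [Finite F] :
    ∃ c : F, ∀ r, ¬ (simplestCubic c).IsRoot r := by
  by_contra! hroot
  choose r hr using hroot
  have hinj : Function.Injective r := by
    intro c d hcd
    have hc := hr c
    have hd := hr d
    rw [← hcd, IsRoot.def, eval_simplestCubic] at hd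
    have hne := mul_ne_zero (ne_zero_of_isRoot_simplestCubic hc)
      (one_sub_ne_zero_of_isRoot_simplestCubic hc)
    rw [IsRoot.def, eval_simplestCubic] at hc
    refine sub_eq_zero.1 ((mul_eq_zero.1 ?_).resolve_right hne)
    linear_combination hc - hd
  obtain ⟨c, hc⟩ := Finite.surjective_of_injective hinj 0
  exact ne_zero_of_isRoot_simplestCubic (hr c) hc

lemma mem_subfield_of_isRoot_simplestCubic {s : F} {k : Subfield F}
    (hr : (simplestCubic t).IsRoot r) (hs : (simplestCubic t).IsRoot s) (hrk : r ∈ k) : s ∈ k := by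
  rw [simplestCubic_eq_prod hr, root_mul, root_mul, root_X_sub_C, root_X_sub_C, root_X_sub_C] at hs
  obtain (rfl | rfl) | rfl := hs
  · exact hrk
  · exact inv_mem (sub_mem (one_mem k) hrk)
  · exact sub_mem (one_mem k) (inv_mem hrk)

/-- The discriminant of `simplestCubic t` is the square of `t ^ 2 - 3 * t + 9`. -/
lemma eval_derivative_simplestCubic_ne_zero (ht : t ^ 2 - 3 * t + 9 ≠ 0)
    (h : (simplestCubic t).IsRoot r) : (simplestCubic t).derivative.eval r ≠ 0 := by
  have hne := mul_ne_zero ht (mul_ne_zero (ne_zero_of_isRoot_simplestCubic h)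
    (one_sub_ne_zero_of_isRoot_simplestCubic h))
  rw [IsRoot.def, eval_simplestCubic] at h
  rw [eval_derivative_simplestCubic]
  exact fun hder => hne (by
    linear_combination (3 * r + t - 3) * h - (r ^ 2 - r + 1) * hder)

end Field

section AdjoinRoot

variable {K : Type*} [Field K] {t : K}

lemma isRoot_root_simplestCubic :
    (simplestCubic (algebraMap K (AdjoinRoot (simplestCubic t)) t)).IsRoot
      (AdjoinRoot.root (simplestCubic t)) := by
  rw [← map_simplestCubic, IsRoot.def, eval_map]
  exact AdjoinRoot.eval₂_root _

variable [Fact (Irreducible (simplestCubic t))]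

lemma finrank_adjoinRoot_simplestCubic :
    Module.finrank K (AdjoinRoot (simplestCubic t)) = 3 := by
  let pb := AdjoinRoot.powerBasis (monic_simplestCubic t).ne_zero
  rw [pb.finrank, AdjoinRoot.powerBasis_dim, natDegree_simplestCubic]

instance finiteDimensional_adjoinRoot_simplestCubic :
    FiniteDimensional K (AdjoinRoot (simplestCubic t)) :=
  (AdjoinRoot.powerBasis (monic_simplestCubic t).ne_zero).finite

instance isSplittingField_adjoinRoot_simplestCubic :
    IsSplittingField K (AdjoinRoot (simplestCubic t)) (simplestCubic t) := by
  constructor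
  · have hprod := simplestCubic_eq_prod (isRoot_root_simplestCubic (t := t))
    rw [map_simplestCubic, hprod]
    exact ((Splits.X_sub_C _).mul (Splits.X_sub_C _)).mul (Splits.X_sub_C _)
  · rw [eq_top_iff, ← AdjoinRoot.adjoinRoot_eq_top]
    refine Algebra.adjoin_mono (Set.singleton_subset_iff.2 (mem_rootSet'.2 ⟨?_, ?_⟩))
    · exact ((monic_simplestCubic t).map _).ne_zero
    · exact AdjoinRoot.eval₂_root _

instance isGalois_adjoinRoot_simplestCubic [CharZero K] :
    IsGalois K (AdjoinRoot (simplestCubic t)) :=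
  have := Normal.of_isSplittingField (F := K) (E := AdjoinRoot (simplestCubic t)) (simplestCubic t)
  { }

instance numberField_adjoinRoot_simplestCubic [NumberField K] :
    NumberField (AdjoinRoot (simplestCubic t)) :=
  .of_module_finite K _

lemma eq_one_of_apply_root_simplestCubic_eq {σ : Gal(AdjoinRoot (simplestCubic t)/K)}
    (hσ : σ (AdjoinRoot.root (simplestCubic t)) = AdjoinRoot.root (simplestCubic t)) : σ = 1 :=
  AlgEquiv.coe_toAlgHom_injective (AdjoinRoot.algHom_ext hσ)

lemma card_gal_adjoinRoot_simplestCubic [CharZero K] :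
    Nat.card Gal(AdjoinRoot (simplestCubic t)/K) = 3 := by
  rw [IsGalois.card_aut_eq_finrank, finrank_adjoinRoot_simplestCubic]

end AdjoinRoot

end SimplestCubic

section CyclicCharacter

variable {G : Type*} [Group G] {p : ℕ} [Fact p.Prime]

lemma mul_comm_of_card_eq_prime (hG : Nat.card G = p) (g h : G) : g * h = h * g :=
  have := isCyclic_of_prime_card hG
  IsCyclic.commGroup.mul_comm g h

lemma exists_injective_monoidHom_units_complex (hG : Nat.card G = p) :
    ∃ χ : G →* ℂˣ, Function.Injective χ := by
  have := isCyclic_of_prime_card hG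
  let _ : CommGroup G := IsCyclic.commGroup
  have : Finite G := Nat.finite_of_card_ne_zero (hG ▸ (Fact.out : p.Prime).ne_zero)
  have : Fact (Nat.card G).Prime := hG ▸ inferInstance
  have := Finite.one_lt_card_iff_nontrivial.1 (Fact.out : (Nat.card G).Prime).one_lt
  obtain ⟨g, hg⟩ := exists_ne (1 : G)
  obtain ⟨χ, hχ⟩ := CommGroup.exists_apply_ne_one_of_hasEnoughRootsOfUnity G ℂ hg
  refine ⟨χ, (MonoidHom.ker_eq_bot_iff χ).1 ?_⟩
  refine (Subgroup.eq_bot_or_eq_top_of_prime_card χ.ker).resolve_right fun htop => hχ ?_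
  exact MonoidHom.mem_ker.1 (htop ▸ Subgroup.mem_top g)

end CyclicCharacter

section Splitting

open NumberField IsDedekindDomain
open scoped Pointwise

lemma normal_normalClosure_sup_normalClosure (F K K' L : Type*) [Field F] [Field K] [Field K']
    [Field L] [Algebra F K] [Algebra F K'] [Algebra F L] [Algebra.IsAlgebraic F K]
    [Algebra.IsAlgebraic F K'] [IsAlgClosed L] :
    Normal F ↥(IntermediateField.normalClosure F K L ⊔ IntermediateField.normalClosure F K' L) := by
  have hK : IsNormalClosure F K (IntermediateField.normalClosure F K L) :=
    Algebra.IsAlgebraic.isNormalClosure_normalClosure fun _ => IsAlgClosed.splits _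
  have hK' : IsNormalClosure F K' (IntermediateField.normalClosure F K' L) :=
    Algebra.IsAlgebraic.isNormalClosure_normalClosure fun _ => IsAlgClosed.splits _
  have := hK.normal
  have := hK'.normal
  infer_instance

lemma exists_isGalois_compositum (N N' : Type*) [Field N] [NumberField N] [Field N']
    [NumberField N'] : ∃ (Ω : Type) (_ : Field Ω) (_ : NumberField Ω),
      IsGalois ℚ Ω ∧ Nonempty (N →+* Ω) ∧ Nonempty (N' →+* Ω) := by
  let i : N →ₐ[ℚ] ℂ := IsAlgClosed.lift
  let j : N' →ₐ[ℚ] ℂ := IsAlgClosed.lift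
  let Ω := IntermediateField.normalClosure ℚ N ℂ ⊔ IntermediateField.normalClosure ℚ N' ℂ
  have hgalois : IsGalois ℚ Ω :=
    { to_normal := normal_normalClosure_sup_normalClosure ℚ N N' ℂ }
  have hi' : i.fieldRange ≤ Ω := i.fieldRange_le_normalClosure.trans le_sup_left
  have hj' : j.fieldRange ≤ Ω := j.fieldRange_le_normalClosure.trans le_sup_right
  exact ⟨Ω, inferInstance, { to_finiteDimensional := inferInstance }, hgalois,
    ⟨i.codRestrict Ω.toSubalgebra fun x => hi' ⟨x, rfl⟩⟩,
    ⟨j.codRestrict Ω.toSubalgebra fun x => hj' ⟨x, rfl⟩⟩⟩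

section CosetPrime

variable {K Ω : Type*} [Field K] [NumberField K] [Field Ω] [NumberField Ω] [Algebra K Ω]
  [IsGalois ℚ Ω]

variable (K Ω) in
lemma card_quotient_galoisSubgroup :
    Nat.card (Gal(Ω/ℚ) ⧸ galoisSubgroup K Ω) = Module.finrank ℚ K := by
  have : IsGalois K Ω := IsGalois.tower_top_of_isGalois ℚ K Ω
  have hinj : Function.Injective (AlgEquiv.restrictScalarsHom ℚ : Gal(Ω/K) →* Gal(Ω/ℚ)) :=
    AlgEquiv.restrictScalars_injective ℚ
  have hcard : Nat.card (galoisSubgroup K Ω) = Module.finrank K Ω := by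
    rw [← IsGalois.card_aut_eq_finrank]
    exact Nat.card_congr (MonoidHom.ofInjective hinj).symm.toEquiv
  have hmul := Subgroup.card_eq_card_quotient_mul_card_subgroup (galoisSubgroup K Ω)
  rw [IsGalois.card_aut_eq_finrank, hcard, ← Module.finrank_mul_finrank ℚ K Ω] at hmul
  exact (Nat.eq_of_mul_eq_mul_right Module.finrank_pos hmul).symm

variable {Q : HeightOneSpectrum (𝓞 Ω)}

lemma cosetPrime_injective (hsplit : normCount K (residueChar Q) = Module.finrank ℚ K) :
    Function.Injective (cosetPrime K Q) := by
  have hfinite := finite_residueChar_eq K (residueChar_prime Q)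
  let f (q : Gal(Ω/ℚ) ⧸ galoisSubgroup K Ω) : {v : HeightOneSpectrum (𝓞 K) |
    residueChar v = residueChar Q} := ⟨cosetPrime K Q q, residueChar_cosetPrime q⟩
  have hf : Function.Surjective f := fun v =>
    (exists_cosetPrime_eq v.2).imp fun q hq => Subtype.ext hq
  have hle : Nat.card (Gal(Ω/ℚ) ⧸ galoisSubgroup K Ω) ≤
      Nat.card {v : HeightOneSpectrum (𝓞 K) | residueChar v = residueChar Q} := by
    rw [card_quotient_galoisSubgroup, ← hsplit, Nat.card_coe_set_eq]
    exact Set.ncard_le_ncard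
      (fun v hv => ((absNorm_eq_prime_iff (residueChar_prime Q)).1 hv).1) hfinite
  have hbij := (Nat.bijective_iff_surjective_and_card f).2
    ⟨hf, hle.antisymm (Nat.card_le_card_of_surjective f hf)⟩
  exact fun q q' h => hbij.1 (Subtype.ext h)

lemma smul_quotient_eq_self (hsplit : normCount K (residueChar Q) = Module.finrank ℚ K)
    {g : Gal(Ω/ℚ)} (hg : g • Q = Q) (q : Gal(Ω/ℚ) ⧸ galoisSubgroup K Ω) : g • q = q :=
  cosetPrime_injective hsplit (cosetPrime_smul hg q)

end CosetPrime

lemma exists_normCount_eq_finrank (K : Type*) [Field K] [NumberField K] {B : Set ℕ}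
    (hB : B.Finite) : ∃ p, p.Prime ∧ p ∉ B ∧ normCount K p = Module.finrank ℚ K := by
  obtain ⟨Ω, _, _, _, ⟨i⟩, -⟩ := exists_isGalois_compositum K K
  let _ : Algebra K Ω := i.toAlgebra
  obtain ⟨Q, F, h, hQ, hF⟩ := exists_isUnramifiedFrobenius_zpowers_eq hB (1 : Gal(Ω/ℚ))
  obtain rfl : F = 1 := by simpa using hF
  have := Fintype.ofFinite (Gal(Ω/ℚ) ⧸ galoisSubgroup K Ω)
  refine ⟨residueChar Q, residueChar_prime Q, hQ, ?_⟩
  rw [normCount_residueChar h, ← card_quotient_galoisSubgroup K Ω, Nat.card_eq_fintype_card]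
  simp

end Splitting

section FrobeniusOnRoots

open Polynomial

lemma eq_of_isRoot_of_sub_mem {R : Type*} [CommRing R] [IsDomain R] {f : R[X]} {I : Ideal R}
    {r s : R} (hr : f.IsRoot r) (hs : f.IsRoot s) (hsr : s - r ∈ I)
    (hder : f.derivative.eval r ∉ I) : s = r := by
  obtain ⟨k, hk⟩ := f.binomExpansion r (s - r)
  rw [add_sub_cancel, hr.eq_zero, hs.eq_zero] at hk
  by_contra hne
  have hmul : (s - r) * (f.derivative.eval r + k * (s - r)) = 0 := by linear_combination -hk
  have hzero := (mul_eq_zero.1 hmul).resolve_left (sub_ne_zero.2 hne)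
  exact hder (eq_neg_of_add_eq_zero_left hzero ▸ I.neg_mem (I.mul_mem_left k hsr))

section Field

variable {F : Type*} [Field F] {p : ℕ} [CharP F p] {t r : F}

/-- For `2 * t = 3` the roots are `-1`, `1 / 2` and `2`. -/
lemma pow_eq_self_of_isRoot_simplestCubic [Fact p.Prime] (ht : 2 * t = 3)
    (hr : (simplestCubic t).IsRoot r) : r ^ p = r := by
  have hneg : (simplestCubic t).IsRoot (-1) := by
    rw [IsRoot.def, eval_simplestCubic]
    linear_combination -ht
  exact (Subfield.mem_bot_iff_pow_eq_self F p).1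
    (mem_subfield_of_isRoot_simplestCubic hneg hr (neg_mem (one_mem _)))

lemma eval_derivative_simplestCubic_ne_zero_of_two_mul_eq_three (hp : ¬ p ∣ 3) (ht : 2 * t = 3)
    (hr : (simplestCubic t).IsRoot r) : (simplestCubic t).derivative.eval r ≠ 0 := by
  refine eval_derivative_simplestCubic_ne_zero (fun hdisc => ?_) hr
  have hthree : (3 : F) ≠ 0 := mt (CharP.cast_eq_zero_iff F p 3).1 hp
  exact pow_ne_zero 3 hthree (by linear_combination 4 * hdisc - (2 * t - 3) * ht)

lemma pow_ne_self_of_isRoot_simplestCubic [Fact p.Prime] {A : Type*} [CommRing A] {f : A →+* F}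
    (hf : Function.Injective f) {a : A} (ha : ∀ b, ¬ (simplestCubic a).IsRoot b)
    (hr : (simplestCubic (f a)).IsRoot r) : r ^ p ≠ r := by
  intro hpow
  obtain ⟨n, rfl⟩ := (mem_bot_iff_intCast p F).1
    ((Subfield.mem_bot_iff_pow_eq_self F p).2 hpow)
  rw [← map_intCast f, IsRoot.def, eval_map_simplestCubic] at hr
  exact ha n ((map_eq_zero_iff f hf).1 hr)

end Field

section Frobenius

variable {R G : Type*} [CommRing R] [Group G] [MulSemiringAction G R] {P : Ideal R}
  [P.IsMaximal] {p : ℕ} [Fact p.Prime] [CharP (R ⧸ P) p] {σ : G} {r : R}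

lemma smul_eq_self_of_isRoot_simplestCubic [IsDomain R] {t : R}
    (hσ : ∀ y : R, σ • y - y ^ p ∈ P) (hσt : σ • t = t) (hp : ¬ p ∣ 3) (ht : 2 * t - 3 ∈ P)
    (hr : (simplestCubic t).IsRoot r) : σ • r = r := by
  let _ := Ideal.Quotient.field P
  have hσr : (simplestCubic t).IsRoot (σ • r) := by
    have hroot := isRoot_map_simplestCubic (MulSemiringAction.toRingHom G R σ) hr
    rwa [MulSemiringAction.toRingHom_apply, MulSemiringAction.toRingHom_apply, hσt] at hroot
  have hr' := isRoot_map_simplestCubic (Ideal.Quotient.mk P) hr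
  have ht' : 2 * Ideal.Quotient.mk P t = 3 := by
    rw [← map_ofNat (Ideal.Quotient.mk P) 2, ← map_ofNat (Ideal.Quotient.mk P) 3, ← map_mul]
    exact Ideal.Quotient.eq.2 ht
  refine eq_of_isRoot_of_sub_mem hr hσr (I := P) ?_ ?_
  · have hpow := pow_eq_self_of_isRoot_simplestCubic (p := p) ht' hr'
    rw [← map_pow, Ideal.Quotient.eq] at hpow
    simpa using P.add_mem (hσ r) hpow
  · have hder := eval_derivative_simplestCubic_ne_zero_of_two_mul_eq_three hp ht' hr'
    rwa [← map_simplestCubic, derivative_map, eval_map_apply, ne_eq,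
      Ideal.Quotient.eq_zero_iff_mem] at hder

lemma smul_ne_self_of_isRoot_simplestCubic {A : Type*} [CommRing A] [Algebra A R] {t : A}
    (hσ : ∀ y : R, σ • y - y ^ p ∈ P)
    (ht : ∀ b, ¬ (simplestCubic (Ideal.Quotient.mk (P.under A) t)).IsRoot b)
    (hr : (simplestCubic (algebraMap A R t)).IsRoot r) : σ • r ≠ r := by
  intro hfix
  let _ := Ideal.Quotient.field P
  have hr' : (simplestCubic (Ideal.quotientMap P (algebraMap A R) le_rfl
      (Ideal.Quotient.mk (P.under A) t))).IsRoot (Ideal.Quotient.mk P r) := by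
    rw [Ideal.quotientMap_mk]
    exact isRoot_map_simplestCubic _ hr
  refine pow_ne_self_of_isRoot_simplestCubic (p := p) Ideal.quotientMap_injective ht hr' ?_
  rw [← map_pow, eq_comm, Ideal.Quotient.eq]
  simpa only [hfix] using hσ r

end Frobenius

end FrobeniusOnRoots

section AdaptedParameter

open NumberField IsDedekindDomain Polynomial

variable {K : Type*} [Field K]

lemma exists_ringOfIntegers_isRoot_simplestCubic {K N : Type*} [Field K] [Field N] [Algebra K N]
    {t : 𝓞 K} {r : N} (hr : (simplestCubic (algebraMap K N t)).IsRoot r) :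
    ∃ α : 𝓞 N, (α : N) = r ∧ (simplestCubic (algebraMap (𝓞 K) (𝓞 N) t)).IsRoot α := by
  have hint : IsIntegral (𝓞 K) r := ⟨simplestCubic t, monic_simplestCubic t, by
    rwa [← eval_map, map_simplestCubic]⟩
  obtain ⟨α, rfl⟩ := (IsIntegralClosure.isIntegral_iff (A := 𝓞 N)).1
    (isIntegral_trans (R := ℤ) r hint)
  refine ⟨α, rfl, (map_eq_zero_iff _ (RingOfIntegers.coe_injective (K := N))).1 ?_⟩
  rw [← eval_map_simplestCubic]
  exact hr

instance charP_quotient_residueChar (v : HeightOneSpectrum (𝓞 K)) :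
    CharP (𝓞 K ⧸ v.asIdeal) (residueChar v) where
  cast_eq_zero_iff n := by
    rw [← map_natCast (Ideal.Quotient.mk v.asIdeal), Ideal.Quotient.eq_zero_iff_mem,
      natCast_mem_asIdeal_iff]

variable [NumberField K]

/-- A parameter `t` for which, at the primes above one completely split rational prime, the
reduction of the simplest cubic is irreducible at `v` and totally split elsewhere. -/
structure IsAdaptedParameter (v : HeightOneSpectrum (𝓞 K)) (t : 𝓞 K) : Prop where
  not_dvd_three : ¬ residueChar v ∣ 3
  normCount_eq : normCount K (residueChar v) = Module.finrank ℚ K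
  not_isRoot : ∀ b, ¬ (simplestCubic (Ideal.Quotient.mk v.asIdeal t)).IsRoot b
  mem_of_ne : ∀ w : HeightOneSpectrum (𝓞 K), residueChar w = residueChar v → w ≠ v →
    2 * t - 3 ∈ w.asIdeal

variable (K) in
lemma exists_isAdaptedParameter :
    ∃ (v : HeightOneSpectrum (𝓞 K)) (t : 𝓞 K), IsAdaptedParameter v t := by
  classical
  obtain ⟨p, hp, hmem, hsplit⟩ := exists_normCount_eq_finrank K (B := {2, 3}) (Set.toFinite _)
  obtain ⟨hp2, hp3⟩ := not_or.1 hmem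
  obtain ⟨m, hm⟩ := hp.odd_of_ne_two hp2
  obtain ⟨v, rfl⟩ := exists_residueChar_eq K hp
  let _ := Ideal.Quotient.field v.asIdeal
  have := Ideal.finiteQuotientOfFreeOfNeBot v.asIdeal v.ne_bot
  obtain ⟨c, hc⟩ := exists_forall_not_isRoot_simplestCubic (𝓞 K ⧸ v.asIdeal)
  obtain ⟨c, rfl⟩ := Ideal.Quotient.mk_surjective c
  obtain ⟨t, ht⟩ := IsDedekindDomain.exists_forall_sub_mem_ideal
    (s := (finite_residueChar_eq K hp).toFinset) HeightOneSpectrum.asIdeal (fun _ => 1)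
    (fun w _ => w.prime) (fun _ _ _ _ => mt HeightOneSpectrum.ext)
    fun w => if w = v then c else ((m + 2 : ℕ) : 𝓞 K)
  simp only [Set.Finite.mem_toFinset, Set.mem_ofPred_eq, pow_one] at ht
  have htv : t - c ∈ v.asIdeal := by simpa using ht v rfl
  refine ⟨v, t, mt (Nat.prime_dvd_prime_iff_eq hp Nat.prime_three).1 hp3, hsplit, ?_, ?_⟩
  · rwa [Ideal.Quotient.eq.2 htv]
  · intro w hw hwv
    have htw : t - (m + 2 : ℕ) ∈ w.asIdeal := by simpa [hwv] using ht w hw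
    have hsub : 2 * t - 3 = 2 * (t - (m + 2 : ℕ)) + (residueChar v : ℕ) := by
      rw [hm]
      push_cast
      ring
    rw [hsub]
    exact w.asIdeal.add_mem (w.asIdeal.mul_mem_left _ htw)
      (natCast_mem_asIdeal_iff.2 (dvd_of_eq hw))

lemma IsAdaptedParameter.irreducible {v : HeightOneSpectrum (𝓞 K)} {t : 𝓞 K}
    (h : IsAdaptedParameter v t) : Irreducible (simplestCubic (t : K)) := by
  refine irreducible_simplestCubic fun r hr => ?_
  obtain ⟨b, -, hb⟩ := exists_ringOfIntegers_isRoot_simplestCubic (N := K) (t := t) hr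
  exact h.not_isRoot _ (isRoot_map_simplestCubic (Ideal.Quotient.mk v.asIdeal) hb)

end AdaptedParameter

section AdaptedCharacter

open NumberField IsDedekindDomain
open scoped Pointwise

section Inflation

variable {K N Ω : Type*} [Field K] [NumberField K] [Field N] [Algebra K N] [Field Ω]
  [NumberField Ω] [Algebra K Ω] [Algebra N Ω] [IsScalarTower K N Ω] [Normal K N]
  {χ : Gal(N/K) →* ℂˣ} {g : Gal(Ω/ℚ)}

lemma extendByZero_inflation_pow_card (χ : Gal(N/K) →* ℂˣ) (hg : g ∈ galoisSubgroup K Ω) :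
    extendByZero (inflation Ω χ) g ^ Nat.card Gal(N/K) = 1 := by
  obtain ⟨σ, rfl⟩ := hg
  rw [AlgEquiv.restrictScalarsHom_apply, extendByZero_inflation, ← Units.val_pow_eq_pow_val,
    ← map_pow, pow_card_eq_one', map_one, Units.val_one]

lemma extendByZero_inflation_eq_one_iff (hχ : Function.Injective χ) {α : 𝓞 N}
    (hα : ∀ σ : Gal(N/K), σ • α = α → σ = 1) (hg : g ∈ galoisSubgroup K Ω) :
    extendByZero (inflation Ω χ) g = 1 ↔
      g • algebraMap (𝓞 N) (𝓞 Ω) α = algebraMap (𝓞 N) (𝓞 Ω) α := by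
  obtain ⟨σ, rfl⟩ := hg
  have hsmul : AlgEquiv.restrictScalarsHom ℚ σ • algebraMap (𝓞 N) (𝓞 Ω) α =
      algebraMap (𝓞 N) (𝓞 Ω) (AlgEquiv.restrictNormalHom N σ • α) :=
    (algebraMap_restrictNormalHom_smul σ α).symm
  rw [hsmul, (FaithfulSMul.algebraMap_injective (𝓞 N) (𝓞 Ω)).eq_iff,
    AlgEquiv.restrictScalarsHom_apply, extendByZero_inflation, Units.val_eq_one,
    map_eq_one_iff χ hχ]
  exact ⟨fun h => by rw [h, one_smul], hα _⟩

end Inflation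

namespace IsAdaptedParameter

variable {K N Ω : Type*} [Field K] [NumberField K] [Field N] [Algebra K N] [Field Ω]
  [NumberField Ω] [Algebra K Ω] [Algebra N Ω] [IsScalarTower K N Ω] [Normal K N]
  {χ : Gal(N/K) →* ℂˣ} {g : Gal(Ω/ℚ)} {v : HeightOneSpectrum (𝓞 K)} {t : 𝓞 K} {α : 𝓞 N}
  {w : HeightOneSpectrum (𝓞 Ω)}

lemma extendByZero_ne_one (h : IsAdaptedParameter v t) (hχ : Function.Injective χ)
    (hα : (simplestCubic (algebraMap (𝓞 K) (𝓞 N) t)).IsRoot α)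
    (hfaithful : ∀ σ : Gal(N/K), σ • α = α → σ = 1) (hg : g ∈ galoisSubgroup K Ω)
    (hfrob : IsArithFrobAt ℤ g w.asIdeal) (hw : primeBelow K w = v) :
    extendByZero (inflation Ω χ) g ≠ 1 := by
  have : Fact (residueChar w).Prime := ⟨residueChar_prime w⟩
  rw [ne_eq, extendByZero_inflation_eq_one_iff hχ hfaithful hg]
  have hroot := isRoot_map_simplestCubic (algebraMap (𝓞 N) (𝓞 Ω)) hα
  rw [← IsScalarTower.algebraMap_apply] at hroot
  subst hw
  exact smul_ne_self_of_isRoot_simplestCubic (P := w.asIdeal) (p := residueChar w) hfrob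
    h.not_isRoot hroot

lemma extendByZero_eq_one (h : IsAdaptedParameter v t) (hχ : Function.Injective χ)
    (hα : (simplestCubic (algebraMap (𝓞 K) (𝓞 N) t)).IsRoot α)
    (hfaithful : ∀ σ : Gal(N/K), σ • α = α → σ = 1) (hg : g ∈ galoisSubgroup K Ω)
    (hfrob : IsArithFrobAt ℤ g w.asIdeal) (hchar : residueChar w = residueChar v)
    (hw : primeBelow K w ≠ v) : extendByZero (inflation Ω χ) g = 1 := by
  have : Fact (residueChar w).Prime := ⟨residueChar_prime w⟩
  have hfix : g • algebraMap (𝓞 K) (𝓞 Ω) t = algebraMap (𝓞 K) (𝓞 Ω) t :=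
    RingOfIntegers.ext (mem_galoisSubgroup_iff.1 hg t)
  have hmem : algebraMap (𝓞 K) (𝓞 Ω) (2 * t - 3) ∈ w.asIdeal :=
    h.mem_of_ne (primeBelow K w) ((residueChar_primeBelow w).trans hchar) hw
  rw [map_sub, map_mul, map_ofNat, map_ofNat] at hmem
  have hroot := isRoot_map_simplestCubic (algebraMap (𝓞 N) (𝓞 Ω)) hα
  rw [← IsScalarTower.algebraMap_apply] at hroot
  rw [extendByZero_inflation_eq_one_iff hχ hfaithful hg]
  exact smul_eq_self_of_isRoot_simplestCubic (P := w.asIdeal) (p := residueChar w) hfrob hfix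
    (hchar ▸ h.not_dvd_three) hmem hroot

lemma exists_frobenius [IsGalois ℚ Ω] (h : IsAdaptedParameter v t) (hχ : Function.Injective χ)
    (hα : (simplestCubic (algebraMap (𝓞 K) (𝓞 N) t)).IsRoot α)
    (hfaithful : ∀ σ : Gal(N/K), σ • α = α → σ = 1) :
    ∃ γ ∈ galoisSubgroup K Ω, extendByZero (inflation Ω χ) γ ≠ 1 ∧
      ∀ q : Gal(Ω/ℚ) ⧸ galoisSubgroup K Ω, q ≠ (1 : Gal(Ω/ℚ)) →
        inducedDiag (inflation Ω χ) γ q = 1 := by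
  obtain ⟨Q, rfl⟩ := primeBelow_surjective Ω v
  obtain ⟨γ, hγ⟩ := IsArithFrobAt.exists_of_isInvariant ℤ Gal(Ω/ℚ) Q.asIdeal
  have hγQ : γ • Q = Q := HeightOneSpectrum.ext hγ.mem_stabilizer
  have hsplit := h.normCount_eq
  rw [residueChar_primeBelow] at hsplit
  have hmem (x : Gal(Ω/ℚ)) : x⁻¹ * γ * x ∈ galoisSubgroup K Ω := by
    rw [mul_assoc, ← QuotientGroup.eq, eq_comm]
    exact smul_quotient_eq_self hsplit hγQ (x : Gal(Ω/ℚ) ⧸ galoisSubgroup K Ω)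
  have hfrob (x : Gal(Ω/ℚ)) : IsArithFrobAt ℤ (x⁻¹ * γ * x) (x⁻¹ • Q).asIdeal := by
    simpa using hγ.conj x⁻¹
  have hγmem : γ ∈ galoisSubgroup K Ω := by simpa using hmem 1
  refine ⟨γ, hγmem, h.extendByZero_ne_one hχ hα hfaithful hγmem hγ rfl, fun q hq => ?_⟩
  obtain ⟨x, rfl⟩ := QuotientGroup.mk_surjective q
  refine h.extendByZero_eq_one hχ hα hfaithful (hmem x) (hfrob x) ?_ fun hx => hq ?_
  · rw [residueChar_smul, residueChar_primeBelow]
  · exact cosetPrime_injective hsplit (by rw [cosetPrime_mk, cosetPrime_mk, hx, inv_one, one_smul])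

end IsAdaptedParameter

end AdaptedCharacter

open Filter in
theorem stmt_2_general (K : Type) [Field K] [NumberField K] :
    ∃ (E : FiniteAbelianExtension K) (χ : Gal(E.N/K) →* ℂˣ), Module.finrank K E.N = 3 ∧
      ∀ (K' N' : Type) [Field K'] [NumberField K'] [Field N'] [NumberField N'] [Algebra K' N']
        [IsGalois K' N'] (χ' : Gal(N'/K') →* ℂˣ),
        (∀ᶠ s : ℝ in atTop, artinLFunction K E.N χ s = artinLFunction K' N' χ' s) →
        Nonempty (K ≃+* K') := by
  obtain ⟨v, t, ht⟩ := exists_isAdaptedParameter K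
  have : Fact (Irreducible (simplestCubic (t : K))) := ⟨ht.irreducible⟩
  let N := AdjoinRoot (simplestCubic (t : K))
  have hcard : Nat.card Gal(N/K) = 3 := card_gal_adjoinRoot_simplestCubic
  obtain ⟨χ, hχ⟩ := exists_injective_monoidHom_units_complex hcard
  obtain ⟨α, hα, hroot⟩ := exists_ringOfIntegers_isRoot_simplestCubic
    (isRoot_root_simplestCubic (t := (t : K)))
  have hfaithful (σ : Gal(N/K)) (hσ : σ • α = α) : σ = 1 :=
    eq_one_of_apply_root_simplestCubic_eq (hα ▸ congrArg Subtype.val hσ)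
  refine ⟨{ N := N, abelian := mul_comm_of_card_eq_prime hcard }, χ,
    finrank_adjoinRoot_simplestCubic, fun K' N' _ _ _ _ _ _ χ' hL => ?_⟩
  obtain ⟨Ω, _, _, _, ⟨i⟩, ⟨j⟩⟩ := exists_isGalois_compositum N N'
  let _ : Algebra N Ω := i.toAlgebra
  let _ : Algebra N' Ω := j.toAlgebra
  let _ : Algebra K Ω := (i.comp (algebraMap K N)).toAlgebra
  let _ : Algebra K' Ω := (j.comp (algebraMap K' N')).toAlgebra
  have : IsScalarTower K N Ω := .of_algebraMap_eq' rfl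
  have : IsScalarTower K' N' Ω := .of_algebraMap_eq' rfl
  obtain ⟨γ, hγ, hne, hone⟩ := ht.exists_frobenius (Ω := Ω) hχ hroot hfaithful
  have hpow := extendByZero_inflation_pow_card χ hγ
  rw [hcard] at hpow
  exact nonempty_ringEquiv_of_artinLFunction_eq hL (by norm_num) hone hne hpow

/-- For every number field `K` there exist a finite abelian extension `N_K/K` of degree three
and a character `χ` of `Gal(N_K/K)` such that: whenever `K'` is a number field, `N_{K'}/K'` a
finite abelian extension and `χ'` a character of `Gal(N_{K'}/K')` with
`L_K(χ, s) = L_{K'}(χ', s)`, the fields `K` and `K'` are isomorphic. -/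
theorem stmt_2 (K : Type) [Field K] [NumberField K] :
    ∃ (E : FiniteAbelianExtension K) (χ : (E.N ≃ₐ[K] E.N) →* ℂˣ),
      Module.finrank K E.N = 3 ∧
      ∀ (K' : Type) [Field K'] [NumberField K'] (E' : FiniteAbelianExtension K')
        (χ' : (E'.N ≃ₐ[K'] E'.N) →* ℂˣ),
        (∀ s : ℂ, 1 < s.re → artinLFunction K E.N χ s = artinLFunction K' E'.N χ' s) →
        Nonempty (K ≃+* K') := by
  obtain ⟨E, χ, hdeg, hE⟩ := stmt_2_general K
  exact ⟨E, χ, hdeg, fun K' _ _ E' χ' hL => hE K' E'.N χ' <|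
    (Filter.eventually_gt_atTop 1).mono fun s hs => hL s (by simpa using hs)⟩
end

section
/- Let G be a finite group, H ≤ G a subgroup of index n, and l an odd prime. Fix left coset representatives X₁,…,Xₙ of G/H with X₁ representing the coset H. Let G̃ = C_l^n ⋊ G, where C_l ⊂ ℂ^× is the cyclic group of l-th roots of unity and G acts on C_l^n by permuting coordinates according to its action on the cosets X₁,…,Xₙ; let H̃ = C_l^n ⋊ H ≤ G̃, and let χ: H̃ → C_l be the character sending (ζ₁,…,ζₙ, h) to ζ₁. Then for every subgroup H̃' ≤ G̃ and every one-dimensional character χ': H̃' → ℂ^×, if the induced representations satisfy Ind_{H̃'}^{G̃}(χ') ≅ Ind_{H̃}^{G̃}(χ), then H̃' and H̃ are conjugate subgroups of G̃. -/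
noncomputable section

/-- The carrier of the representation of `G` induced from a one-dimensional character
`χ : H → ℂˣ` of a subgroup `H ≤ G`: the space of functions `f : G → ℂ` with
`f (h * g) = χ h * f g`. -/
def IndCarrier {G : Type} [Group G] (H : Subgroup G) (χ : H →* ℂˣ) : Submodule ℂ (G → ℂ) where
  carrier := {f | ∀ (h : H) (g : G), f (↑h * g) = (χ h : ℂ) * f g}
  add_mem' := fun ha hb h g => by
    simp only [Set.mem_setOf_eq] at *
    simp [ha h g, hb h g, mul_add]
  zero_mem' := fun h g => by simp
  smul_mem' := fun c a ha h g => by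
    simp only [Set.mem_setOf_eq] at *
    simp [ha h g]
    ring

/-- The representation of `G` induced from the one-dimensional character `χ` of `H ≤ G`,
realized on `IndCarrier H χ` by right translation. -/
def ind {G : Type} [Group G] (H : Subgroup G) (χ : H →* ℂˣ) :
    Representation ℂ G (IndCarrier H χ) where
  toFun g :=
    { toFun := fun f => ⟨fun x => f.1 (x * g), fun h x => by
        simpa [mul_assoc] using f.2 h (x * g)⟩
      map_add' := fun f₁ f₂ => rfl
      map_smul' := fun c f => rfl }
  map_one' := by
    ext f x
    simp
  map_mul' g₁ g₂ := by
    ext f x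
    simp [mul_assoc]

/-- Two representations are equivalent if there is a `ℂ`-linear equivalence intertwining the
two actions. -/
def RepEquiv {G V W : Type} [Group G] [AddCommGroup V] [Module ℂ V] [AddCommGroup W]
    [Module ℂ W] (ρ : Representation ℂ G V) (τ : Representation ℂ G W) : Prop :=
  ∃ e : V ≃ₗ[ℂ] W, ∀ (g : G) (v : V), e (ρ g v) = τ g (e v)

/-- The direct sum of two representations. -/
def prodRep {G V W : Type} [Group G] [AddCommGroup V] [Module ℂ V] [AddCommGroup W]
    [Module ℂ W] (ρ : Representation ℂ G V) (τ : Representation ℂ G W) :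
    Representation ℂ G (V × W) where
  toFun g := (ρ g).prodMap (τ g)
  map_one' := by ext <;> simp
  map_mul' g₁ g₂ := by ext <;> simp

/-- A representation is irreducible if the space is nonzero and the only invariant submodules
are `⊥` and `⊤`. -/
def IsIrreducibleRep {G V : Type} [Group G] [AddCommGroup V] [Module ℂ V]
    (ρ : Representation ℂ G V) : Prop :=
  Nontrivial V ∧ ∀ p : Submodule ℂ V, (∀ g : G, ∀ v ∈ p, ρ g v ∈ p) → p = ⊥ ∨ p = ⊤

/-- The complex conjugate of a one-dimensional character. -/
def conjChar {H : Type} [Group H] (χ : H →* ℂˣ) : H →* ℂˣ :=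
  (Units.map (starRingEnd ℂ).toMonoidHom).comp χ
/-- `C_l`: the group of `l`-th roots of unity in `ℂˣ`. -/
abbrev rootsC (l : ℕ) : Subgroup ℂˣ := rootsOfUnity l ℂ

variable (G : Type) [Group G] (H : Subgroup G) (l : ℕ)

/-- The automorphism of `C_l^{G/H}` permuting the coordinates according to the left
translation action of `g` on the cosets `G/H`. -/
def permAut (g : G) : ((G ⧸ H) → rootsC l) ≃* ((G ⧸ H) → rootsC l) where
  toFun f x := f (g⁻¹ • x)
  invFun f x := f (g • x)
  left_inv f := funext fun x => by simp
  right_inv f := funext fun x => by simp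
  map_mul' f₁ f₂ := rfl

/-- The action of `G` on `C_l^{G/H}` by permuting the coordinates as `G` permutes the left
cosets `G/H`. -/
def permHom : G →* MulAut ((G ⧸ H) → rootsC l) where
  toFun := permAut G H l
  map_one' := MulEquiv.ext fun f => funext fun x => by
    show f ((1 : G)⁻¹ • x) = f x
    rw [inv_one, one_smul]
  map_mul' g₁ g₂ := MulEquiv.ext fun f => funext fun x => by
    show f ((g₁ * g₂)⁻¹ • x) = f (g₂⁻¹ • g₁⁻¹ • x)
    rw [mul_inv_rev, mul_smul]

/-- `G̃ = C_l^{G/H} ⋊ G`. -/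
abbrev Gtil := ((G ⧸ H) → rootsC l) ⋊[permHom G H l] G

/-- `H̃ = C_l^{G/H} ⋊ H`, as a subgroup of `G̃`: the elements whose `G`-component lies
in `H`. -/
def Htil : Subgroup (Gtil G H l) := Subgroup.comap SemidirectProduct.rightHom H

/-- The character `χ : H̃ → C_l ⊆ ℂˣ` given by projection onto the coordinate indexed by the
trivial coset `H ∈ G/H`. -/
def chiTil : Htil G H l →* ℂˣ where
  toFun x := ((x.1.left ((1 : G) : G ⧸ H) : ℂˣ))
  map_one' := by simp
  map_mul' x y := by
    have hxy : (x * y).1.left = x.1.left * permHom G H l x.1.right y.1.left :=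
      SemidirectProduct.mul_left x.1 y.1
    have hmem : x.1.right ∈ H := x.2
    have hco : (x.1.right)⁻¹ • ((1 : G) : G ⧸ H) = ((1 : G) : G ⧸ H) := by
      show ((x.1.right⁻¹ * 1 : G) : G ⧸ H) = ((1 : G) : G ⧸ H)
      rw [mul_one]
      exact (QuotientGroup.eq).2 (by simpa using hmem)
    calc ((x * y).1.left ((1 : G) : G ⧸ H) : ℂˣ)
        = ((x.1.left ((1 : G) : G ⧸ H) * y.1.left ((x.1.right)⁻¹ • ((1 : G) : G ⧸ H)) : rootsC l) : ℂˣ) := by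
          rw [hxy]; rfl
      _ = (x.1.left ((1 : G) : G ⧸ H) : ℂˣ) * (y.1.left ((1 : G) : G ⧸ H) : ℂˣ) := by
          rw [hco]; push_cast; rfl

/-!
The subgroup inducing a monomial representation is recovered from a vector: if `f` is a nonzero
function in `Ind_L ψ` supported on one coset `L g`, the elements preserving the line through `f`
form the group `g⁻¹ L g`. For `H̃'` this applies to the function `δ` supported on `H̃'` itself, so
the stabilizer of the line through the image `F` of `δ` in `Ind χ` is `H̃'`, and it suffices to see
that `F` is supported on a single coset of `H̃`.

An element `ζ` of `C_l^n` with a single nontrivial coordinate acts on `Ind χ`, hence on `Ind χ'`,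
with `ζ - 1` of rank at most one. As `ζ` has odd order, this forces `ζ ∈ H̃'`: an element outside
`H̃'` whose square is also outside permutes cosets in cycles of length at least three, and then
`ζ - 1` has rank at least two. Hence `F` is an eigenvector of every such `ζ`, and comparing
eigenvalues at two cosets of `H̃` shows that `F` cannot be nonzero on both.
-/

section LineStabilizer

open Representation

variable {k Γ V W : Type*} [Group Γ]

/-- The subgroup of elements acting on `v` through a unit scalar. Over a field and for `v ≠ 0` this
is the stabilizer of the line spanned by `v`. -/
def lineStabilizer [Semiring k] [AddCommMonoid V] [Module k V] (ρ : Representation k Γ V)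
    (v : V) : Subgroup Γ where
  carrier := {g | ∃ c : kˣ, ρ g v = (c : k) • v}
  one_mem' := ⟨1, by simp⟩
  mul_mem' := by
    rintro g h ⟨c, hc⟩ ⟨d, hd⟩
    exact ⟨d * c, by simp [hc, hd, smul_smul]⟩
  inv_mem' := by
    rintro g ⟨c, hc⟩
    refine ⟨c⁻¹, ?_⟩
    calc ρ g⁻¹ v = ρ g⁻¹ ((c⁻¹ * c : kˣ) • v) := by simp
      _ = (↑c⁻¹ : k) • ρ g⁻¹ (ρ g v) := by simp [hc, smul_smul]
      _ = (↑c⁻¹ : k) • v := by simp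

theorem mem_lineStabilizer_iff [Semiring k] [AddCommMonoid V] [Module k V]
    {ρ : Representation k Γ V} {v : V} {g : Γ} :
    g ∈ lineStabilizer ρ v ↔ ∃ c : kˣ, ρ g v = (c : k) • v :=
  Iff.rfl

theorem lineStabilizer_apply_of_injective [Semiring k] [AddCommMonoid V] [Module k V]
    [AddCommMonoid W] [Module k W] {ρ : Representation k Γ V} {τ : Representation k Γ W}
    {φ : V →ₗ[k] W} (hφ : IsIntertwiningMap ρ τ φ) (hinj : Function.Injective φ) (v : V) :
    lineStabilizer τ (φ v) = lineStabilizer ρ v := by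
  ext g
  simp only [mem_lineStabilizer_iff, ← hφ.isIntertwining, ← map_smul, hinj.eq_iff]

end LineStabilizer

theorem rank_sub_one_le_of_injective.{u} {k Γ : Type*} {V W : Type u} [Ring k] [Monoid Γ]
    [AddCommGroup V] [Module k V] [AddCommGroup W] [Module k W] {ρ : Representation k Γ V}
    {τ : Representation k Γ W} {φ : V →ₗ[k] W} (hφ : ρ.IsIntertwiningMap τ φ)
    (hinj : Function.Injective φ) (g : Γ) :
    LinearMap.rank (ρ g - 1) ≤ LinearMap.rank (τ g - 1) := by
  have hcomm : φ ∘ₗ (ρ g - 1) = (τ g - 1) ∘ₗ φ := by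
    ext v
    simp [hφ.isIntertwining]
  calc LinearMap.rank (ρ g - 1) = LinearMap.rank (φ ∘ₗ (ρ g - 1)) := by
        rw [LinearMap.rank, LinearMap.rank, LinearMap.range_comp, rank_map_eq hinj]
    _ ≤ LinearMap.rank (τ g - 1) := hcomm ▸ LinearMap.rank_comp_le_left φ (τ g - 1)

theorem mem_of_sq_mem_of_odd_orderOf {K : Type*} [Group K] {L : Subgroup K} {b : K}
    (hb : Odd (orderOf b)) (hsq : b ^ 2 ∈ L) : b ∈ L := by
  obtain ⟨m, hm⟩ := exists_pow_eq_self_of_coprime (Nat.coprime_two_left.mpr hb)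
  exact hm ▸ L.pow_mem hsq m

namespace IndCarrier

variable {K : Type} [Group K] {L : Subgroup K} {ψ : L →* ℂˣ}

/-- The function `f` of the induced representation vanishes outside the right coset `L g`. -/
def SupportedOnCoset (f : IndCarrier L ψ) (g : K) : Prop :=
  ∀ x, f.1 x ≠ 0 → x * g⁻¹ ∈ L

theorem apply_of_mul_inv_mem (f : IndCarrier L ψ) {g x : K} (hx : x * g⁻¹ ∈ L) :
    f.1 x = ψ ⟨x * g⁻¹, hx⟩ * f.1 g := by
  simpa using f.2 ⟨x * g⁻¹, hx⟩ g

theorem rank_le_one_of_supportedOnCoset {W : Submodule ℂ (IndCarrier L ψ)} {g : K}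
    (hW : ∀ f ∈ W, SupportedOnCoset f g) : Module.rank ℂ W ≤ 1 := by
  let evalAt : W →ₗ[ℂ] ℂ := LinearMap.proj g ∘ₗ (IndCarrier L ψ).subtype ∘ₗ W.subtype
  have hinj : Function.Injective evalAt := by
    rw [injective_iff_map_eq_zero]
    rintro ⟨f, hf⟩ (hfg : f.1 g = 0)
    ext x
    by_contra hx
    exact hx (by simp [apply_of_mul_inv_mem f (hW f hf x hx), hfg])
  simpa using evalAt.rank_le_of_injective hinj

theorem map_conj_lineStabilizer_ind {f : IndCarrier L ψ} {g : K} (hg : f.1 g ≠ 0)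
    (hf : SupportedOnCoset f g) :
    (lineStabilizer (ind L ψ) f).map (MulAut.conj g).toMonoidHom = L := by
  ext s
  rw [Subgroup.mem_map_equiv, MulAut.conj_symm_apply, mem_lineStabilizer_iff]
  constructor
  · rintro ⟨c, hc⟩
    have hval : f.1 (g * (g⁻¹ * s * g)) = c * f.1 g := congrFun (congrArg Subtype.val hc) g
    simpa [mul_assoc] using hf (g * (g⁻¹ * s * g)) (hval ▸ mul_ne_zero c.ne_zero hg)
  · intro hs
    refine ⟨ψ ⟨s, hs⟩, ?_⟩
    ext x
    change f.1 (x * (g⁻¹ * s * g)) = ψ ⟨s, hs⟩ * f.1 x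
    by_cases hx : x * g⁻¹ ∈ L
    · calc f.1 (x * (g⁻¹ * s * g)) = f.1 (((⟨x * g⁻¹, hx⟩ * ⟨s, hs⟩ : L) : K) * g) := by
            simp [mul_assoc]
        _ = ψ ⟨s, hs⟩ * (ψ ⟨x * g⁻¹, hx⟩ * f.1 g) := by
            rw [f.2, map_mul, Units.val_mul]
            ring
        _ = ψ ⟨s, hs⟩ * f.1 x := by rw [apply_of_mul_inv_mem f hx]
    · have hxs : x * (g⁻¹ * s * g) * g⁻¹ ∉ L := by
        simpa [← mul_assoc, Subgroup.mul_mem_cancel_right L hs] using hx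
      rw [not_imp_comm.mp (hf _) hxs, not_imp_comm.mp (hf _) hx, mul_zero]

variable (L ψ) in
open Classical in
/-- The function of the induced representation that extends `ψ` by zero outside `L`. -/
def delta : IndCarrier L ψ :=
  ⟨fun g => if hg : g ∈ L then ψ ⟨g, hg⟩ else 0, fun h g => by
    by_cases hg : g ∈ L
    · have hmul : ψ ⟨h * g, L.mul_mem h.2 hg⟩ = ψ h * ψ ⟨g, hg⟩ := map_mul ψ h ⟨g, hg⟩
      simp [hg, L.mul_mem_cancel_left h.2, hmul]
    · simp [hg, L.mul_mem_cancel_left h.2]⟩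

theorem delta_of_notMem {g : K} (hg : g ∉ L) : (delta L ψ).1 g = 0 :=
  dif_neg hg

theorem delta_one : (delta L ψ).1 1 = 1 := by
  have h : (delta L ψ).1 1 = ψ 1 := dif_pos L.one_mem
  simpa using h

theorem delta_ne_zero : delta L ψ ≠ 0 := fun h =>
  one_ne_zero (delta_one.symm.trans (congrFun (congrArg Subtype.val h) 1))

theorem supportedOnCoset_delta : SupportedOnCoset (delta L ψ) 1 := fun x hx => by
  simpa using not_imp_comm.mp delta_of_notMem hx

theorem lineStabilizer_delta : lineStabilizer (ind L ψ) (delta L ψ) = L := by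
  have h := map_conj_lineStabilizer_ind (delta_one.trans_ne one_ne_zero)
    (supportedOnCoset_delta (ψ := ψ))
  rw [map_one] at h
  exact (Subgroup.map_id _).symm.trans h

-- If `b ^ 2 ∉ L`, then `b - 1` maps `δ` and `b⁻¹ δ` to linearly independent functions, as their
-- values at `b⁻¹` and `b` show.
theorem sq_mem_of_rank_ind_sub_one_le_one {b : K}
    (hrank : LinearMap.rank (ind L ψ b - 1) ≤ 1) : b ^ 2 ∈ L := by
  by_contra hsq
  have hb : b ∉ L := fun h => hsq (L.pow_mem h 2)
  have hb_inv : b⁻¹ ∉ L := by rwa [L.inv_mem_iff]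
  have hb_inv_sq : b⁻¹ * b⁻¹ ∉ L := by rwa [← mul_inv_rev, L.inv_mem_iff, ← sq]
  let R : Submodule ℂ (IndCarrier L ψ) := LinearMap.range (ind L ψ b - 1)
  have : Module.Free ℂ R := Module.Free.of_divisionRing ℂ R
  obtain ⟨v, hv⟩ := (rank_submodule_le_one_iff' R).mp hrank
  have exists_coeff (f : IndCarrier L ψ) : ∃ c : ℂ, ∀ x, c * v.1 x = f.1 (x * b) - f.1 x := by
    obtain ⟨c, hc⟩ := Submodule.mem_span_singleton.mp (hv ⟨f, rfl⟩)
    exact ⟨c, fun x => congrFun (congrArg Subtype.val hc) x⟩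
  obtain ⟨c, hc⟩ := exists_coeff (delta L ψ)
  obtain ⟨d, hd⟩ := exists_coeff (ind L ψ b⁻¹ (delta L ψ))
  replace hd (x : K) : d * v.1 x = (delta L ψ).1 (x * b * b⁻¹) - (delta L ψ).1 (x * b⁻¹) := hd x
  have hc_inv : c * v.1 b⁻¹ = 1 := by
    simp [hc, delta_one, delta_of_notMem hb_inv]
  have hd_inv : d * v.1 b⁻¹ = 0 := by
    simp [hd, delta_of_notMem hb_inv, delta_of_notMem hb_inv_sq]
  have hd_self : d * v.1 b = -1 := by
    simp [hd, delta_one, delta_of_notMem hb]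
  have hd_zero : d = 0 := (mul_eq_zero.mp hd_inv).resolve_right (right_ne_zero_of_mul_eq_one hc_inv)
  simp [hd_zero] at hd_self

end IndCarrier

section Wreath

open IndCarrier SemidirectProduct

variable {G H l}

theorem mul_inv_mem_Htil_iff {k g : Gtil G H l} :
    k * g⁻¹ ∈ Htil G H l ↔ k.right⁻¹ • ((1 : G) : G ⧸ H) = g.right⁻¹ • ((1 : G) : G ⧸ H) := by
  simp [Htil, Subgroup.mem_comap, QuotientGroup.eq]

theorem IndCarrier.apply_mul_inl (f : IndCarrier (Htil G H l) (chiTil G H l))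
    (a : (G ⧸ H) → rootsC l) (g : Gtil G H l) :
    f.1 (g * inl a) = ((a (g.right⁻¹ • ((1 : G) : G ⧸ H)) : ℂˣ) : ℂ) * f.1 g := by
  have hconj : inl (permHom G H l g.right a) * g = g * inl a := by
    ext <;> simp [mul_comm]
  have hmem : (inl (permHom G H l g.right a) : Gtil G H l) ∈ Htil G H l := by
    simp [Htil, Subgroup.mem_comap]
  exact hconj ▸ f.2 ⟨_, hmem⟩ g

variable [DecidableEq (G ⧸ H)]

theorem rank_ind_inl_mulSingle_sub_one_le_one (x : G ⧸ H) (z : rootsC l) :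
    LinearMap.rank (ind (Htil G H l) (chiTil G H l) (inl (Pi.mulSingle x z)) - 1) ≤ 1 := by
  obtain ⟨y, rfl⟩ := QuotientGroup.mk_surjective x
  refine rank_le_one_of_supportedOnCoset (g := inr y⁻¹) ?_
  rintro _ ⟨f, rfl⟩ k hk
  rw [mul_inv_mem_Htil_iff]
  by_contra hne
  have hne' : k.right⁻¹ • ((1 : G) : G ⧸ H) ≠ (y : G ⧸ H) := by
    simpa [← QuotientGroup.mk_mul] using hne
  apply hk
  change f.1 (k * inl _) - f.1 k = 0
  rw [apply_mul_inl, Pi.mulSingle_eq_of_ne hne']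
  simp

theorem inl_mulSingle_mem_of_repEquiv (hl : Odd l) {H' : Subgroup (Gtil G H l)} {χ' : H' →* ℂˣ}
    (hiso : RepEquiv (ind H' χ') (ind (Htil G H l) (chiTil G H l))) (x : G ⧸ H) (z : rootsC l) :
    inl (Pi.mulSingle x z) ∈ H' := by
  obtain ⟨e, he⟩ := hiso
  have hpow : (inl (Pi.mulSingle x z) : Gtil G H l) ^ l = 1 := by
    have hz : z ^ l = 1 := Subtype.ext z.2
    rw [← map_pow, ← Pi.mulSingle_pow, hz, Pi.mulSingle_one, map_one]
  refine mem_of_sq_mem_of_odd_orderOf (hl.of_dvd_nat (orderOf_dvd_of_pow_eq_one hpow)) ?_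
  exact sq_mem_of_rank_ind_sub_one_le_one <|
    (rank_sub_one_le_of_injective (φ := e.toLinearMap) ⟨he⟩ e.injective _).trans
      (rank_ind_inl_mulSingle_sub_one_le_one x z)

theorem supportedOnCoset_of_inl_mulSingle_mem {f : IndCarrier (Htil G H l) (chiTil G H l)}
    {g : Gtil G H l} (hg : f.1 g ≠ 0) {ζ : rootsC l} (hζ : ζ ≠ 1)
    (hf : ∀ x, inl (Pi.mulSingle x ζ) ∈ lineStabilizer (ind (Htil G H l) (chiTil G H l)) f) :
    SupportedOnCoset f g := by
  intro k hk
  rw [mul_inv_mem_Htil_iff]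
  by_contra hne
  obtain ⟨c, hc⟩ := hf (k.right⁻¹ • ((1 : G) : G ⧸ H))
  have heigen {y : Gtil G H l} (hy : f.1 y ≠ 0) :
      ((Pi.mulSingle (M := fun _ => rootsC l) (k.right⁻¹ • ((1 : G) : G ⧸ H)) ζ
        (y.right⁻¹ • ((1 : G) : G ⧸ H)) : ℂˣ) : ℂ) = c :=
    mul_right_cancel₀ hy ((apply_mul_inl f _ y).symm.trans (congrFun (congrArg Subtype.val hc) y))
  have hζ_eq := (heigen hk).trans (heigen hg).symm
  rw [Pi.mulSingle_eq_same, Pi.mulSingle_eq_of_ne (Ne.symm hne)] at hζ_eq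
  exact hζ (Subtype.ext (Units.ext hζ_eq))

end Wreath

theorem exists_rootsC_ne_one {l : ℕ} (hl : 1 < l) : ∃ ζ : rootsC l, ζ ≠ 1 := by
  have : NeZero l := ⟨by lia⟩
  have : Nontrivial (rootsC l) := by
    rwa [← Finite.one_lt_card_iff_nontrivial, Complex.card_rootsOfUnity]
  exact exists_ne 1

/-- When the index of `H` is infinite, `ind` is the coinduced representation. -/
theorem stmt_5_general (G : Type) [Group G] (H : Subgroup G) (l : ℕ) (hl : 1 < l) (hlodd : Odd l)
    (H' : Subgroup (Gtil G H l)) (χ' : H' →* ℂˣ)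
    (hiso : RepEquiv (ind H' χ') (ind (Htil G H l) (chiTil G H l))) :
    ∃ g : Gtil G H l, Subgroup.map (MulAut.conj g).toMonoidHom H' = Htil G H l := by
  classical
  have hmem := inl_mulSingle_mem_of_repEquiv hlodd hiso
  obtain ⟨e, he⟩ := hiso
  obtain ⟨ζ, hζ⟩ := exists_rootsC_ne_one hl
  set F := e (IndCarrier.delta H' χ')
  have hstab : lineStabilizer (ind (Htil G H l) (chiTil G H l)) F = H' :=
    (lineStabilizer_apply_of_injective (φ := e.toLinearMap) ⟨he⟩ e.injective _).trans
      IndCarrier.lineStabilizer_delta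
  obtain ⟨g, hg⟩ : ∃ g, F.1 g ≠ 0 := by
    have hF_ne : F ≠ 0 := e.map_ne_zero_iff.mpr IndCarrier.delta_ne_zero
    exact Function.ne_iff.mp (Subtype.coe_ne_coe.mpr hF_ne)
  have hsupp : IndCarrier.SupportedOnCoset F g :=
    supportedOnCoset_of_inl_mulSingle_mem hg hζ fun x => hstab.symm ▸ hmem x ζ
  exact ⟨g, hstab ▸ IndCarrier.map_conj_lineStabilizer_ind hg hsupp⟩

/-- (de Smit) If the representation of `G̃` induced from a one-dimensional character `χ'` of a
subgroup `H̃'` is isomorphic to the one induced from the projection character `χ` of `H̃`, then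
`H̃'` and `H̃` are conjugate in `G̃`. -/
theorem stmt_5 (G : Type) [Group G] [Finite G] (H : Subgroup G) (n : ℕ) (hn : H.index = n)
    (l : ℕ) (hl : l.Prime) (hlodd : Odd l)
    (H' : Subgroup (Gtil G H l)) (χ' : H' →* ℂˣ)
    (hiso : RepEquiv (ind H' χ') (ind (Htil G H l) (chiTil G H l))) :
    ∃ g : Gtil G H l, Subgroup.map (MulAut.conj g).toMonoidHom H' = Htil G H l :=
  stmt_5_general G H l hl.one_lt hlodd H' χ' hiso

end
end
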